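/- arXiv:math/0509351 — 2 statements merged into one kernel-verified Lean document; each statement's English description precedes it below -/
import Mathlib

section
/- There does not exist a non-trivial OC-group; that is, if G is a finite group in which any two elements of the same order lying outside the center Z(G) are conjugate in G, then Z(G) is trivial or Z(G) = G. -/
/-!
In an OC-group the noncentral elements of a given order form a single class, and the class of `x`
has proportion `1 / |C(x)|` in `G`; these proportions cannot add up to `1` if few orders occur. In
a non-abelian `2`-group with nontrivial center the sum is already too small.

Otherwise let `x` be noncentral of odd order. If `t` commutes with `x` and has order prime to that
of `x`, then `x * t` determines `x` and `t`, so all such pairs with given orders are conjugate.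
Hence a central involution `z` is the only involution commuting with `x`, `Z(G) = {1, z}`, and
every noncentral `2`-element commuting with `x` is a square root of `z` of order `4`. As `x` is
conjugate to `x ^ k` for every `k` prime to its order `n`, conjugation realises all of `(ZMod n)ˣ`;
since so few `2`-elements centralize odd elements, `n` is a Fermat prime or `7`, `9`, `11`. Either
no element of order `4` squares to `z`, or an element whose order is a large Fermat prime forces
elements of large `2`-power order. In every case the proportions sum to less than `1`.
-/

open Subgroup

section Orders

variable {G : Type*} [Group G]

theorem semiconjBy_pow_pow {g x : G} {k : ℕ} (h : SemiconjBy g x (x ^ k)) (j : ℕ) :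
    SemiconjBy (g ^ j) x (x ^ k ^ j) := by
  induction j with
  | zero => simp [SemiconjBy]
  | succ j ih =>
    rw [pow_succ' g, pow_succ' k, pow_mul]
    exact (h.pow_right (k ^ j)).mul_left ih

theorem commute_pow_iff_orderOf_dvd {g x : G} {k : ℕ} (h : SemiconjBy g x (x ^ k)) (j : ℕ) :
    Commute (g ^ j) x ↔ orderOf (k : ZMod (orderOf x)) ∣ j := by
  have hj : g ^ j * x = x ^ k ^ j * g ^ j := semiconjBy_pow_pow h j
  calc Commute (g ^ j) x
    _ ↔ x ^ k ^ j = x ^ 1 := by rw [commute_iff_eq, hj, mul_left_inj, pow_one]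
    _ ↔ ((k : ZMod (orderOf x)) ^ j = 1) := by
      rw [pow_eq_pow_iff_modEq, ← ZMod.natCast_eq_natCast_iff, Nat.cast_pow, Nat.cast_one]
    _ ↔ orderOf (k : ZMod (orderOf x)) ∣ j := orderOf_dvd_iff_pow_eq_one.symm

theorem semiconjBy_pow_of_odd {g x y : G} (h : SemiconjBy g x y) (h' : SemiconjBy g y x) {r : ℕ}
    (hr : Odd r) : SemiconjBy (g ^ r) x y := by
  obtain ⟨j, rfl⟩ := hr
  have hcomm : Commute (g ^ 2) y := by
    rw [sq]
    exact h.mul_left h'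
  rw [pow_succ, pow_mul]
  exact SemiconjBy.mul_left (hcomm.pow_left j) h

theorem orderOf_pow_eq_of_orderOf_eq_mul {x : G} {m n : ℕ} (hm : m ≠ 0) (hx : orderOf x = m * n) :
    orderOf (x ^ m) = n := by
  rw [orderOf_pow_of_dvd hm (hx ▸ Nat.dvd_mul_right m n), hx,
    Nat.mul_div_cancel_left n (Nat.pos_of_ne_zero hm)]

theorem exists_orderOf_eq_two_pow_semiconjBy {g x y : G} (hg : IsOfFinOrder g)
    (h : SemiconjBy g x y) (h' : SemiconjBy g y x) :
    ∃ u ∈ zpowers g, (∃ s, orderOf u = 2 ^ s) ∧ SemiconjBy u x y := by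
  obtain ⟨s, r, hr, hsr⟩ := Nat.exists_eq_two_pow_mul_odd hg.orderOf_pos.ne'
  refine ⟨g ^ r, npow_mem_zpowers g r, ⟨s, ?_⟩, semiconjBy_pow_of_odd h h' hr⟩
  exact orderOf_pow_eq_of_orderOf_eq_mul hr.pos.ne' (hsr.trans (mul_comm _ _))

theorem pow_eq_of_mem_zpowers_of_orderOf_eq_two {u z : G} {n : ℕ} (hu : orderOf u = 2 * n)
    (hzu : z ∈ zpowers u) (hz : orderOf z = 2) : u ^ n = z := by
  obtain ⟨j, rfl⟩ := hzu
  have hun : (u ^ n) ^ 2 = 1 := by rw [← pow_mul, mul_comm, ← hu, pow_orderOf_eq_one]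
  have hdvd : ((2 * n : ℕ) : ℤ) ∣ 2 * j := by
    rw [← hu, orderOf_dvd_iff_zpow_eq_one, mul_comm, zpow_mul]
    exact mod_cast orderOf_dvd_iff_pow_eq_one.1 hz.dvd
  obtain ⟨t, rfl⟩ : (n : ℤ) ∣ j := by
    rw [Nat.cast_mul] at hdvd
    exact (mul_dvd_mul_iff_left two_ne_zero).1 hdvd
  have hpow : u ^ (n * t) = (u ^ n) ^ t := by rw [zpow_mul, zpow_natCast]
  change orderOf (u ^ (n * t)) = 2 at hz
  change u ^ n = u ^ (n * t)
  rw [hpow] at hz ⊢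
  obtain ⟨s, rfl | rfl⟩ := Int.even_or_odd' t
  · rw [zpow_mul, zpow_ofNat, hun, one_zpow, orderOf_one] at hz
    lia
  · rw [zpow_add, zpow_mul, zpow_ofNat, hun, one_zpow, zpow_one, one_mul]

theorem commute_of_mem_zpowers {a b c : G} (hc : c ∈ zpowers b) (h : Commute a b) :
    Commute a c := by
  obtain ⟨n, rfl⟩ := hc
  exact h.zpow_right n

theorem commute_of_mem_zpowers_of_mem_zpowers {g u v : G} (hu : u ∈ zpowers g)
    (hv : v ∈ zpowers g) : Commute u v :=
  commute_of_mem_zpowers hv (commute_of_mem_zpowers hu (Commute.refl g)).symm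

theorem orderOf_pow_eq_of_modEq_one {g : G} {m n a : ℕ} (hg : orderOf g = m * n)
    (hpos : 0 < m * n) (ham : a ≡ 1 [MOD m]) (han : n ∣ a) : orderOf (g ^ a) = m := by
  have hcop : m.Coprime a := by
    rw [Nat.coprime_comm, Nat.Coprime, ham.gcd_eq, Nat.gcd_one_left]
  rw [IsOfFinOrder.orderOf_pow, hg, hcop.gcd_mul_left_cancel, Nat.gcd_eq_left han,
    Nat.mul_div_cancel _ (Nat.pos_of_mul_pos_left hpos)]
  exact orderOf_pos_iff.1 (hg ▸ hpos)

theorem exists_mul_eq_of_orderOf_eq_mul {g : G} {m n : ℕ} (hg : orderOf g = m * n)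
    (hpos : 0 < m * n) (hmn : m.Coprime n) :
    ∃ u ∈ zpowers g, ∃ v ∈ zpowers g,
      u * v = g ∧ orderOf u = m ∧ orderOf v = n := by
  obtain ⟨a, ham, han⟩ := Nat.chineseRemainder hmn 1 0
  obtain ⟨b, hbm, hbn⟩ := Nat.chineseRemainder hmn 0 1
  have hab : a + b ≡ 1 [MOD m * n] :=
    (Nat.modEq_and_modEq_iff_modEq_mul hmn).1 ⟨ham.add hbm, han.add hbn⟩
  refine ⟨g ^ a, npow_mem_zpowers g a, g ^ b, npow_mem_zpowers g b, ?_,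
    orderOf_pow_eq_of_modEq_one hg hpos ham (Nat.modEq_zero_iff_dvd.1 han),
    orderOf_pow_eq_of_modEq_one (by rw [hg, mul_comm]) (by rwa [mul_comm]) hbn
      (Nat.modEq_zero_iff_dvd.1 hbm)⟩
  rw [← pow_add, ← pow_one g, ← pow_mul, one_mul, pow_eq_pow_iff_modEq, hg]
  exact hab

theorem exists_two_part_mul_odd_part {g : G} (hg : IsOfFinOrder g) :
    ∃ u ∈ zpowers g, ∃ v ∈ zpowers g,
      u * v = g ∧ (∃ s, orderOf u = 2 ^ s) ∧ Odd (orderOf v) := by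
  obtain ⟨s, r, hr, hsr⟩ := Nat.exists_eq_two_pow_mul_odd hg.orderOf_pos.ne'
  obtain ⟨u, hu, v, hv, huv, hou, hov⟩ := exists_mul_eq_of_orderOf_eq_mul hsr
    (hsr ▸ hg.orderOf_pos) (hr.coprime_two_left.pow_left s)
  exact ⟨u, hu, v, hv, huv, ⟨s, hou⟩, hov ▸ hr⟩

theorem exists_pow_mul_eq_left {m n : ℕ} (hmn : m.Coprime n) :
    ∃ a : ℕ, ∀ x y : G, Commute x y → orderOf x = m → orderOf y = n → (x * y) ^ a = x := by
  obtain ⟨a, ham, han⟩ := Nat.chineseRemainder hmn 1 0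
  refine ⟨a, fun x y hxy hx hy ↦ ?_⟩
  have hya : y ^ a = 1 := orderOf_dvd_iff_pow_eq_one.1 (hy ▸ Nat.modEq_zero_iff_dvd.1 han)
  rw [hxy.mul_pow, hya, mul_one]
  nth_rw 2 [← pow_one x]
  exact pow_eq_pow_iff_modEq.2 (hx ▸ ham)

theorem semiconjBy_of_semiconjBy_mul {g x y x' y' : G} (hxy : Commute x y) (hxy' : Commute x' y')
    (hx : orderOf x = orderOf x') (hy : orderOf y = orderOf y')
    (hcop : (orderOf x).Coprime (orderOf y)) (h : SemiconjBy g (x * y) (x' * y')) :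
    SemiconjBy g x x' ∧ SemiconjBy g y y' := by
  obtain ⟨a, ha⟩ := exists_pow_mul_eq_left (G := G) hcop
  obtain ⟨b, hb⟩ := exists_pow_mul_eq_left (G := G) hcop.symm
  constructor
  · simpa only [ha x y hxy rfl rfl, ha x' y' hxy' hx.symm hy.symm] using h.pow_right a
  · rw [hxy.eq, hxy'.eq] at h
    simpa only [hb y x hxy.symm rfl rfl, hb y' x' hxy'.symm hy.symm hx.symm] using h.pow_right b

end Orders

section Cardinality

variable {G : Type*} [Group G]


theorem card_mul_relIndex_of_le {A B : Subgroup G} (h : A ≤ B) :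
    Nat.card A * A.relIndex B = Nat.card B := by
  simpa only [relIndex_bot_left] using relIndex_mul_relIndex ⊥ A B bot_le h

theorem two_mul_card_le_of_lt {A B : Subgroup G} [Finite B] (h : A < B) :
    2 * Nat.card A ≤ Nat.card B := by
  have hcard := card_mul_relIndex_of_le h.le
  have hB : Nat.card B ≠ 0 := Nat.card_pos.ne'
  have h0 : A.relIndex B ≠ 0 := fun h0 ↦ hB (by rw [← hcard, h0, mul_zero])
  have h1 : A.relIndex B ≠ 1 := fun h1 ↦ h.not_ge (relIndex_eq_one.1 h1)
  rw [← hcard, mul_comm]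
  exact Nat.mul_le_mul_left _ (by lia)

theorem mul_card_dvd_card_of_mem_normalizer {A B : Subgroup G} (hAB : A ≤ B) {g : G} {p : ℕ}
    (hp : p.Prime) (hgB : g ∈ B) (hgA : g ∉ A) (hg : g ∈ normalizer (A : Set G)) (hgp : g ^ p ∈ A) :
    p * Nat.card A ∣ Nat.card B := by
  set M : Subgroup G := normalizer (A : Set G) ⊓ B
  have hAM : A ≤ M := le_inf le_normalizer hAB
  have hnormal : (A.subgroupOf M).Normal := normal_subgroupOf_of_le_normalizer inf_le_left
  let q : M ⧸ A.subgroupOf M := QuotientGroup.mk ⟨g, hg, hgB⟩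
  have hq : q ≠ 1 := by
    rwa [Ne, QuotientGroup.eq_one_iff]
  have hqp : q ^ p = 1 := by
    rw [← QuotientGroup.mk_pow, QuotientGroup.eq_one_iff]
    exact hgp
  have : Fact p.Prime := ⟨hp⟩
  have hindex : p ∣ A.relIndex M := orderOf_eq_prime hqp hq ▸ orderOf_dvd_natCard q
  calc p * Nat.card A
    _ ∣ A.relIndex M * Nat.card A := Nat.mul_dvd_mul_right hindex _
    _ = Nat.card M := by rw [mul_comm, card_mul_relIndex_of_le hAM]
    _ ∣ Nat.card B := card_dvd_of_le inf_le_right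

theorem mem_normalizer_zpowers_of_semiconjBy_inv {g x : G} (h : SemiconjBy g x x⁻¹) :
    g ∈ normalizer (zpowers x : Set G) := by
  rw [mem_normalizer_iff_map_conj_eq, MonoidHom.map_zpowers]
  change zpowers (g * x * g⁻¹) = zpowers x
  rw [h.eq, mul_inv_cancel_right, zpowers_inv]

theorem eight_dvd_card_of_semiconjBy_inv {B : Subgroup G} {i h : G} (hi : orderOf i = 4)
    (hiB : i ∈ B) (hB : h ∈ B) (hinv : SemiconjBy h i i⁻¹) (hsq : h ^ 2 ∈ zpowers i) :
    8 ∣ Nat.card B := by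
  have hmem : h ∉ zpowers i := fun hm ↦ by
    have hcomm : i * i = 1 := by
      have := (commute_of_mem_zpowers hm (Commute.refl i)).symm.eq
      rw [hinv.eq] at this
      rwa [mul_left_inj, inv_eq_iff_mul_eq_one] at this
    have hdvd : orderOf i ∣ 2 := orderOf_dvd_of_pow_eq_one (by rw [sq, hcomm])
    rw [hi] at hdvd
    norm_num at hdvd
  simpa only [Nat.card_zpowers, hi] using mul_card_dvd_card_of_mem_normalizer (p := 2)
    (zpowers_le.2 hiB) Nat.prime_two hB hmem (mem_normalizer_zpowers_of_semiconjBy_inv hinv) hsq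

end Cardinality

/-! ### Prime powers and Fermat numbers -/

section Arithmetic

theorem two_lt_of_odd_of_one_lt {n : ℕ} (ho : Odd n) (hn : 1 < n) : 2 < n := by
  obtain ⟨k, rfl⟩ := ho
  lia

theorem exists_prime_pow_or_coprime_mul {n : ℕ} (hn : 1 < n) :
    (∃ p e, p.Prime ∧ e ≠ 0 ∧ n = p ^ e) ∨
      ∃ a b, 1 < a ∧ 1 < b ∧ a.Coprime b ∧ n = a * b := by
  have hp := Nat.minFac_prime hn.ne'
  obtain ⟨e, m, hm, h⟩ := Nat.exists_eq_pow_mul_and_not_dvd (by lia : n ≠ 0) n.minFac hp.ne_one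
  have he : e ≠ 0 := by
    rintro rfl
    rw [pow_zero, one_mul] at h
    exact hm (h ▸ n.minFac_dvd)
  have hm0 : m ≠ 0 := fun h0 ↦ hm (h0 ▸ dvd_zero _)
  rcases eq_or_ne m 1 with rfl | hm1
  · exact .inl ⟨n.minFac, e, hp, he, by rwa [mul_one] at h⟩
  · exact .inr ⟨n.minFac ^ e, m, Nat.one_lt_pow he hp.one_lt, by lia,
      (hp.coprime_iff_not_dvd.2 hm).pow_left e, h⟩

theorem eq_two_pow_add_one_of_totient_prime_pow {p e k : ℕ} (hp : p.Prime) (hodd : Odd p)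
    (he : e ≠ 0) (h : (p ^ e).totient = 2 ^ k) : (p ^ e).Prime ∧ p ^ e = 2 ^ k + 1 := by
  rw [Nat.totient_prime_pow hp (Nat.pos_of_ne_zero he)] at h
  have he1 : e = 1 := by
    by_contra hne
    have hdvd : p ∣ 2 ^ k := h ▸ (dvd_pow_self p (by lia)).mul_right _
    have hcop : p.Coprime (2 ^ k) := hodd.coprime_two_right.pow_right k
    exact hp.ne_one (hcop.eq_one_of_dvd hdvd)
  subst he1
  rw [Nat.sub_self, pow_zero, one_mul] at h
  rw [pow_one, ← h, Nat.sub_add_cancel hp.one_le]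
  exact ⟨hp, rfl⟩

theorem exists_eq_fermatNumber_of_prime {k : ℕ} (hk : k ≠ 0) (hp : (2 ^ k + 1).Prime) :
    ∃ t, 2 ^ k + 1 = Nat.fermatNumber t := by
  obtain ⟨t, rfl⟩ := Nat.pow_of_pow_add_prime one_lt_two hk hp
  exact ⟨t, rfl⟩

theorem exists_eq_fermatNumber_of_totient_prime_pow {p e k : ℕ} (hp : p.Prime) (hodd : Odd p)
    (he : e ≠ 0) (h : (p ^ e).totient = 2 ^ k) :
    (p ^ e).Prime ∧ ∃ t, p ^ e = Nat.fermatNumber t := by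
  obtain ⟨hprime, heq⟩ := eq_two_pow_add_one_of_totient_prime_pow hp hodd he h
  have hk : k ≠ 0 := by
    rintro rfl
    have := hodd.pow (n := e)
    rw [heq] at this
    exact absurd this (by decide)
  exact ⟨hprime, heq ▸ exists_eq_fermatNumber_of_prime hk (heq ▸ hprime)⟩

theorem totient_prime_pow_eq_two_mul_prime {p e l : ℕ} (hp : p.Prime) (hodd : Odd p) (he : e ≠ 0)
    (hl : l.Prime) (h : (p ^ e).totient = 2 * l) :
    (p ^ e).Prime ∧ p ^ e = 2 * l + 1 ∨ p ^ e = 9 ∧ l = 3 := by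
  rw [Nat.totient_prime_pow hp (Nat.pos_of_ne_zero he)] at h
  obtain ⟨f, rfl⟩ := Nat.exists_eq_succ_of_ne_zero he
  rw [Nat.succ_sub_one] at h
  rcases Nat.eq_zero_or_pos f with rfl | hf
  · left
    rw [Nat.succ_eq_add_one, zero_add, pow_one, ← h, pow_zero, one_mul,
      Nat.sub_add_cancel hp.one_le]
    exact ⟨hp, rfl⟩
  · right
    have hpl : p = l := by
      have hdvd : p ∣ 2 * l := h ▸ (dvd_pow_self p hf.ne').mul_right _
      exact (Nat.prime_dvd_prime_iff_eq hp hl).1 (hodd.coprime_two_right.dvd_of_dvd_mul_left hdvd)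
    subst hpl
    obtain ⟨d, rfl⟩ := Nat.exists_eq_succ_of_ne_zero hf.ne'
    have hd : p ^ d * (p - 1) = 2 := by
      refine Nat.eq_of_mul_eq_mul_left hp.pos ?_
      rw [← mul_assoc, ← pow_succ', h, mul_comm]
    have hcop : (p ^ d).Coprime 2 := hodd.coprime_two_right.pow_left d
    have hpd : p ^ d = 1 := hcop.eq_one_of_dvd ⟨_, hd.symm⟩
    rw [hpd, one_mul] at hd
    obtain rfl : p = 3 := by lia
    refine ⟨?_, rfl⟩
    rw [pow_succ, pow_succ, hpd]
    norm_num

theorem orderOf_eq_two_pow_of_pow_eq_neg_one {R : Type*} [Ring R] (hR : (-1 : R) ≠ 1) {x : R}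
    {j : ℕ} (hx : x ^ 2 ^ j = -1) : orderOf x = 2 ^ (j + 1) :=
  orderOf_eq_prime_pow (hx ▸ hR) (by rw [pow_succ, pow_mul, hx, neg_one_sq])

theorem orderOf_natCast_zmod_dvd_of_dvd {a n : ℕ} (h : a ∣ n) (k : ℕ) :
    orderOf (k : ZMod a) ∣ orderOf (k : ZMod n) := by
  simpa only [MonoidHom.coe_coe, map_natCast] using
    orderOf_map_dvd (ZMod.castHom h (ZMod a) : ZMod n →* ZMod a) (k : ZMod n)

theorem exists_coprime_natCast_eq_and_modEq_one {a b c : ℕ} (hab : a.Coprime b)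
    (hc : c.Coprime a) :
    ∃ k : ℕ, k.Coprime (a * b) ∧ (k : ZMod a) = c ∧ k ≡ 1 [MOD b] := by
  obtain ⟨k, hka, hkb⟩ := Nat.chineseRemainder hab c 1
  refine ⟨k, Nat.Coprime.mul_right ?_ ?_, (ZMod.natCast_eq_natCast_iff _ _ _).2 hka, hkb⟩
  · rwa [Nat.Coprime, hka.gcd_eq]
  · rw [Nat.Coprime, hkb.gcd_eq, Nat.gcd_one_left]

theorem natCast_two_pow_pow_eq_neg_one {t j : ℕ} (hj : j ≤ t) :
    ((2 ^ 2 ^ (t - j) : ℕ) : ZMod (Nat.fermatNumber t)) ^ 2 ^ j = -1 := by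
  have hF : ((2 ^ 2 ^ t + 1 : ℕ) : ZMod (Nat.fermatNumber t)) = 0 := ZMod.natCast_self _
  rw [← Nat.cast_pow, ← pow_mul, ← pow_add, Nat.sub_add_cancel hj]
  rw [Nat.cast_add, Nat.cast_one] at hF
  exact eq_neg_of_add_eq_zero_left hF

theorem two_pow_coprime_fermatNumber (t j : ℕ) : (2 ^ j).Coprime (Nat.fermatNumber t) :=
  (Nat.odd_fermatNumber t).coprime_two_left.pow_left j

-- For `t ≥ 2` the number `2 * F_t + 1` is divisible by `5`.
theorem lt_two_of_prime_two_mul_fermatNumber_add_one {t : ℕ}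
    (hp : (2 * Nat.fermatNumber t + 1).Prime) : t < 2 := by
  by_contra! ht
  obtain ⟨s, rfl⟩ := Nat.exists_eq_add_of_le' ht
  have hF : Nat.fermatNumber (s + 2) = 16 ^ 2 ^ s + 1 := by
    rw [Nat.fermatNumber, pow_add, mul_comm, pow_mul]
    norm_num
  have h16 : 16 ^ 2 ^ s ≡ 1 [MOD 5] := by
    simpa only [one_pow] using (show 16 ≡ 1 [MOD 5] from rfl).pow (2 ^ s)
  have h5 : 5 ∣ 2 * Nat.fermatNumber (s + 2) + 1 := by
    unfold Nat.ModEq at h16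
    lia
  have heq := (Nat.prime_dvd_prime_iff_eq Nat.prime_five hp).1 h5
  have : 16 ≤ 16 ^ 2 ^ s := Nat.le_self_pow (by positivity) 16
  lia

theorem sixteen_pow_le_fermatNumber (t : ℕ) : 16 ^ (t + 1) ≤ Nat.fermatNumber (t + 2) := by
  have hexp : 4 * (t + 1) ≤ 2 ^ (t + 2) := by
    have := Nat.lt_two_pow_self (n := t)
    rw [pow_add]
    lia
  calc 16 ^ (t + 1)
    _ = 2 ^ (4 * (t + 1)) := by rw [pow_mul]; norm_num
    _ ≤ 2 ^ 2 ^ (t + 2) := Nat.pow_le_pow_right two_pos hexp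
    _ ≤ Nat.fermatNumber (t + 2) := Nat.le_succ _

theorem fermatNumber_eq_or_le (t : ℕ) :
    Nat.fermatNumber t = 3 ∨ Nat.fermatNumber t = 5 ∨ 16 ≤ Nat.fermatNumber t := by
  match t with
  | 0 => exact .inl rfl
  | 1 => exact .inr (.inl rfl)
  | t + 2 =>
    exact .inr (.inr ((Nat.le_self_pow t.succ_ne_zero 16).trans (sixteen_pow_le_fermatNumber t)))

theorem two_sub_one_div_two_pow_nonneg (d : ℕ) : (0 : ℚ) ≤ 2 - 1 / 2 ^ d := by
  have : (1 : ℚ) / 2 ^ d ≤ 1 := div_le_one_of_le₀ (one_le_pow₀ one_le_two) (by positivity)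
  linarith

theorem two_div_natCast_le {a b : ℕ} (ha : 0 < a) (h : a ≤ b) : 2 / (b : ℚ) ≤ 2 / a := by
  gcongr

end Arithmetic

/-! ### Class proportions -/

section Freq

variable {α : Type*}

/-- The proportion of the elements of a finite type that lie in `s`. -/
noncomputable def freq (s : Set α) : ℚ := s.ncard / Nat.card α

theorem freq_empty : freq (∅ : Set α) = 0 := by
  rw [freq, Set.ncard_empty, Nat.cast_zero, zero_div]

theorem freq_mono [Finite α] {s t : Set α} (h : s ⊆ t) : freq s ≤ freq t :=
  div_le_div_of_nonneg_right (Nat.cast_le.2 (Set.ncard_le_ncard h)) (Nat.cast_nonneg _)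

theorem freq_union_le (s t : Set α) : freq (s ∪ t) ≤ freq s + freq t := by
  rw [freq, freq, freq, ← add_div]
  exact div_le_div_of_nonneg_right (mod_cast Set.ncard_union_le s t) (Nat.cast_nonneg _)

theorem freq_biUnion_le {ι : Type*} (I : Finset ι) (s : ι → Set α) :
    freq (⋃ i ∈ I, s i) ≤ ∑ i ∈ I, freq (s i) := by
  unfold freq
  rw [← Finset.sum_div]
  exact div_le_div_of_nonneg_right (mod_cast Finset.set_ncard_biUnion_le I s) (Nat.cast_nonneg _)

theorem freq_univ [Finite α] [Nonempty α] : freq (Set.univ : Set α) = 1 := by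
  rw [freq, Set.ncard_univ, div_self (Nat.cast_ne_zero.2 Nat.card_pos.ne')]

variable {G : Type*} [Group G]

theorem freq_setOf_isConj [Finite G] (x : G) :
    freq {g | IsConj g x} = 1 / Nat.card (centralizer {x}) := by
  have horbit : {g | IsConj g x} = MulAction.orbit (ConjAct G) x :=
    Set.ext fun _ ↦ ConjAct.mem_orbit_conjAct.symm
  have hcard : Nat.card (centralizer {x}) * (MulAction.orbit (ConjAct G) x).ncard = Nat.card G := by
    rw [nat_card_centralizer_nat_card_stabilizer, ← MulAction.index_stabilizer, card_mul_index]
    rfl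
  have hC : (Nat.card (centralizer {x}) : ℚ) ≠ 0 := Nat.cast_ne_zero.2 Nat.card_pos.ne'
  have hG : (Nat.card G : ℚ) ≠ 0 := Nat.cast_ne_zero.2 Nat.card_pos.ne'
  rw [horbit, freq, div_eq_div_iff hG hC, one_mul, mul_comm]
  exact_mod_cast hcard

/-- The proportion of the noncentral elements of order `n` in a finite group. -/
noncomputable def orderFreq (G : Type*) [Group G] (n : ℕ) : ℚ :=
  freq {g : G | g ∉ center G ∧ orderOf g = n}

theorem orderFreq_eq_zero {n : ℕ} (h : ∀ x : G, x ∉ center G → orderOf x ≠ n) :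
    orderFreq G n = 0 := by
  have hempty : {g : G | g ∉ center G ∧ orderOf g = n} = ∅ :=
    Set.eq_empty_of_forall_notMem fun x hx ↦ h x hx.1 hx.2
  rw [orderFreq, hempty, freq_empty]

end Freq

section Centralizer

variable {G : Type*} [Group G]

theorem commute_of_mem_center {z : G} (hz : z ∈ center G) (g : G) : Commute g z :=
  mem_center_iff.1 hz g

theorem eq_of_semiconjBy_of_mem_center {g b c : G} (hc : c ∈ center G) (h : SemiconjBy g b c) :
    b = c := by
  have hgc : g * c = c * g := commute_of_mem_center hc g
  exact mul_left_cancel (h.eq.trans hgc.symm)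

theorem self_mem_centralizer (x : G) : x ∈ centralizer {x} :=
  mem_centralizer_singleton_iff.2 rfl

theorem orderOf_dvd_card_centralizer {x y : G} (h : Commute y x) :
    orderOf y ∣ Nat.card (centralizer {x}) :=
  orderOf_dvd_natCard _ (mem_centralizer_singleton_iff.2 h)

theorem centralizer_le_centralizer_pow (x : G) (n : ℕ) : centralizer {x} ≤ centralizer {x ^ n} :=
  fun _ hg ↦ mem_centralizer_singleton_iff.2
    (Commute.pow_right (mem_centralizer_singleton_iff.1 hg) n)

variable [Finite G]

theorem two_mul_card_centralizer_le {x : G} (hx : x ∉ center G) :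
    2 * Nat.card (centralizer {x}) ≤ Nat.card G := by
  have hlt : centralizer {x} < ⊤ := lt_top_iff_ne_top.2 fun h ↦ hx <| mem_center_iff.2 fun g ↦
    mem_centralizer_singleton_iff.1 (h ▸ mem_top g)
  simpa only [card_top] using two_mul_card_le_of_lt hlt

theorem two_mul_card_center_le {x : G} (hx : x ∉ center G) :
    2 * Nat.card (center G) ≤ Nat.card (centralizer {x}) :=
  two_mul_card_le_of_lt <| lt_of_le_of_ne (center_le_centralizer _) fun h ↦
    hx (h ▸ self_mem_centralizer x)

theorem four_mul_card_center_le {x : G} (hx : x ∉ center G) :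
    4 * Nat.card (center G) ≤ Nat.card G := by
  have hC := two_mul_card_centralizer_le hx
  have hZ := two_mul_card_center_le hx
  lia

end Centralizer

/-! ### OC-groups -/

/-- An OC-group: any two elements of the same order outside the center are conjugate. -/
def IsOCGroup (G : Type*) [Group G] : Prop :=
  ∀ x y : G, x ∉ center G → y ∉ center G → orderOf x = orderOf y → IsConj x y

namespace IsOCGroup

variable {G : Type*} [Group G] (hG : IsOCGroup G)

include hG

theorem exists_semiconjBy {x y : G} (hx : x ∉ center G) (hy : y ∉ center G)
    (h : orderOf x = orderOf y) : ∃ g, SemiconjBy g x y :=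
  let ⟨g, hg⟩ := hG x y hx hy h
  ⟨g, hg⟩

theorem exists_semiconjBy_pow {x : G} (hx : x ∉ center G) {k : ℕ} (hk : (orderOf x).Coprime k) :
    ∃ g, SemiconjBy g x (x ^ k) := by
  obtain ⟨m, hm⟩ := exists_pow_eq_self_of_coprime hk.symm
  exact hG.exists_semiconjBy hx (fun h ↦ hx (hm ▸ pow_mem h m)) hk.orderOf_pow.symm

theorem exists_semiconjBy_inv {x : G} (hx : x ∉ center G) : ∃ g, SemiconjBy g x x⁻¹ :=
  hG.exists_semiconjBy hx (fun h ↦ hx (inv_mem_iff.1 h)) (orderOf_inv x).symm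

theorem exists_semiconjBy_pair {x y x' y' : G} (hx : x ∉ center G) (hx' : x' ∉ center G)
    (hxy : Commute x y) (hxy' : Commute x' y') (hox : orderOf x = orderOf x')
    (hoy : orderOf y = orderOf y') (hcop : (orderOf x).Coprime (orderOf y)) :
    ∃ g, SemiconjBy g x x' ∧ SemiconjBy g y y' := by
  obtain ⟨a, ha⟩ := exists_pow_mul_eq_left (G := G) hcop
  have hmul {u v : G} (hu : u ∉ center G) (huv : (u * v) ^ a = u) : u * v ∉ center G :=
    fun h ↦ hu (huv ▸ pow_mem h a)
  obtain ⟨g, hg⟩ := hG.exists_semiconjBy (hmul hx (ha x y hxy rfl rfl))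
    (hmul hx' (ha x' y' hxy' hox.symm hoy.symm)) (by
      rw [hxy.orderOf_mul_eq_mul_orderOf_of_coprime hcop,
        hxy'.orderOf_mul_eq_mul_orderOf_of_coprime (hox ▸ hoy ▸ hcop), hox, hoy])
  exact ⟨g, semiconjBy_of_semiconjBy_mul hxy hxy' hox hoy hcop hg⟩

theorem eq_of_commute_of_mem_center {a b c : G} (ha : a ∉ center G) (hab : Commute a b)
    (hc : c ∈ center G) (hbc : orderOf b = orderOf c) (hcop : (orderOf a).Coprime (orderOf b)) :
    b = c := by
  obtain ⟨g, -, hg⟩ := hG.exists_semiconjBy_pair ha ha hab (commute_of_mem_center hc a) rfl hbc hcop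
  exact eq_of_semiconjBy_of_mem_center hc hg

theorem sq_eq_one_of_mem_center {a c : G} (ha : a ∉ center G) (hc : c ∈ center G)
    (hcop : (orderOf a).Coprime (orderOf c)) : c ^ 2 = 1 := by
  have h := hG.eq_of_commute_of_mem_center ha (commute_of_mem_center hc a) (inv_mem hc)
    (orderOf_inv c).symm hcop
  rw [sq, mul_eq_one_iff_eq_inv]
  exact h

variable [Finite G]

theorem orderFreq_orderOf {x : G} (hx : x ∉ center G) :
    orderFreq G (orderOf x) = 1 / Nat.card (centralizer {x}) := by
  rw [orderFreq, ← freq_setOf_isConj]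
  congr 1 with g
  refine ⟨fun ⟨hg, ho⟩ ↦ hG g x hg hx ho, fun h ↦ ⟨fun hg ↦ ?_, ?_⟩⟩
  · obtain ⟨c, hc⟩ := h.symm
    exact hx (eq_of_semiconjBy_of_mem_center hg hc ▸ hg)
  · obtain ⟨c, hc⟩ := h
    exact hc.orderOf_eq _

theorem orderFreq_le {n c : ℕ} (hc : 0 < c)
    (h : ∀ x : G, x ∉ center G → orderOf x = n → c ≤ Nat.card (centralizer {x})) :
    orderFreq G n ≤ 1 / c := by
  by_cases hex : ∃ x : G, x ∉ center G ∧ orderOf x = n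
  · obtain ⟨x, hx, rfl⟩ := hex
    rw [hG.orderFreq_orderOf hx]
    exact one_div_le_one_div_of_le (mod_cast hc) (mod_cast h x hx rfl)
  · push Not at hex
    rw [orderFreq_eq_zero hex]
    positivity

theorem orderFreq_le_one_div {n : ℕ} (hn : 0 < n) : orderFreq G n ≤ 1 / n :=
  hG.orderFreq_le hn fun x _ hx ↦
    Nat.le_of_dvd Nat.card_pos (hx ▸ orderOf_dvd_card_centralizer (Commute.refl x))

end IsOCGroup

theorem centralizer_pow_of_coprime {G : Type*} [Group G] {x : G} {k : ℕ}
    (hk : (orderOf x).Coprime k) : centralizer {x ^ k} = centralizer {x} := by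
  obtain ⟨m, hm⟩ := exists_pow_eq_self_of_coprime hk.symm
  refine le_antisymm ?_ (centralizer_le_centralizer_pow x k)
  simpa only [hm] using centralizer_le_centralizer_pow (x ^ k) m

theorem mem_normalizer_centralizer_of_semiconjBy {G : Type*} [Group G] {g x y : G}
    (h : SemiconjBy g x y) (hxy : centralizer {y} = centralizer {x}) :
    g ∈ normalizer (centralizer {x} : Set G) := by
  obtain rfl : g * x * g⁻¹ = y := mul_inv_eq_of_eq_mul h
  refine mem_normalizer_iff.2 fun c ↦ ?_
  nth_rw 2 [← hxy]
  rw [mem_centralizer_singleton_iff, mem_centralizer_singleton_iff, conj_mul, conj_mul]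
  exact (MulAut.conj g).injective.eq_iff.symm

namespace IsOCGroup

variable {G : Type*} [Group G] (hG : IsOCGroup G)

include hG

-- With `q = orderOf y / p`, an element conjugating `y` to `y ^ (1 + q)` induces an automorphism of
-- order `p` on the centralizer of `y` inside the centralizer of `y ^ p`.
theorem prime_mul_card_centralizer_dvd {y : G} (hy : y ∉ center G) {p : ℕ} (hp : p.Prime)
    (hpy : p ^ 2 ∣ orderOf y) (hfin : IsOfFinOrder y) :
    p * Nat.card (centralizer {y}) ∣ Nat.card (centralizer {y ^ p}) := by
  obtain ⟨m, hm⟩ := hpy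
  have hq : orderOf y = p * (p * m) := by rw [hm, sq, mul_assoc]
  have hpos : 0 < p * m := Nat.pos_of_mul_pos_left (hq ▸ hfin.orderOf_pos)
  set q := p * m with hqdef
  have hdvd : orderOf y ∣ q ^ 2 := ⟨m, by rw [hq, sq, hqdef]; ring⟩
  have hcop : (orderOf y).Coprime (1 + q) :=
    Nat.Coprime.of_dvd_left hdvd (by simp)
  obtain ⟨g, hg⟩ := hG.exists_semiconjBy_pow hy hcop
  refine mul_card_dvd_card_of_mem_normalizer (centralizer_le_centralizer_pow y p) hp (g := g)
    ?_ ?_ (mem_normalizer_centralizer_of_semiconjBy hg (centralizer_pow_of_coprime hcop)) ?_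
  · have hgp : SemiconjBy g (y ^ p) ((y ^ (1 + q)) ^ p) := hg.pow_right p
    rwa [← pow_mul, add_mul, one_mul, pow_add, mul_comm q, ← hq, pow_orderOf_eq_one, mul_one,
      SemiconjBy, ← mem_centralizer_singleton_iff] at hgp
  · intro h
    have hgy : g * y = y * g := mem_centralizer_singleton_iff.1 h
    have hyq : y ^ q = 1 := by
      rw [← mul_right_inj y, ← pow_succ', add_comm, mul_one]
      exact mul_right_cancel (hg.eq.symm.trans hgy)
    have hlt : orderOf y ≤ q := orderOf_le_of_pow_eq_one hpos hyq
    have htwo := hp.two_le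
    nlinarith
  · have hpow : ((1 + q : ℕ) : ZMod (orderOf y)) ^ p = 1 := by
      have hq2 : (q : ZMod (orderOf y)) ^ 2 = 0 := by
        rw [← Nat.cast_pow, ZMod.natCast_eq_zero_iff]
        exact hdvd
      have hpq : (p * q : ZMod (orderOf y)) = 0 := by
        rw [← Nat.cast_mul, ← hq, ZMod.natCast_self]
      obtain ⟨c, hc⟩ := Polynomial.powAddExpansion 1 (q : ZMod (orderOf y)) p
      rw [Nat.cast_add, Nat.cast_one, hc, one_pow, one_pow, mul_one, hpq, hq2, mul_zero, add_zero,
        add_zero]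
    exact mem_centralizer_singleton_iff.2
      ((commute_pow_iff_orderOf_dvd hg p).2 (orderOf_dvd_of_pow_eq_one hpow))

end IsOCGroup

/-! ### OC-groups of prime power order -/

theorem one_le_freq_add_sum_freq {α ι : Type*} [Finite α] [Nonempty α] {A : Set α} (I : Finset ι)
    (s : ι → Set α) (h : ∀ x ∉ A, ∃ i ∈ I, x ∈ s i) : 1 ≤ freq A + ∑ i ∈ I, freq (s i) :=
  calc (1 : ℚ)
    _ = freq Set.univ := freq_univ.symm
    _ ≤ freq (A ∪ ⋃ i ∈ I, s i) := freq_mono fun x _ ↦ by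
      by_cases hx : x ∈ A
      · exact Or.inl hx
      · obtain ⟨i, hi, hxi⟩ := h x hx
        exact Or.inr (Set.mem_biUnion hi hxi)
    _ ≤ freq A + freq (⋃ i ∈ I, s i) := freq_union_le _ _
    _ ≤ freq A + ∑ i ∈ I, freq (s i) := by
      gcongr
      exact freq_biUnion_le I s

theorem freq_coe_subgroup {G : Type*} [Group G] (H : Subgroup G) :
    freq (H : Set G) = Nat.card H / Nat.card G := rfl

theorem freq_center_le_one_fourth {G : Type*} [Group G] [Finite G] {x : G} (hx : x ∉ center G) :
    freq (center G : Set G) ≤ 1 / 4 := by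
  have hpos : (0 : ℚ) < Nat.card G := mod_cast Nat.card_pos
  rw [freq_coe_subgroup, div_le_div_iff₀ hpos (by norm_num)]
  have hcard := four_mul_card_center_le hx
  norm_cast
  lia

namespace IsOCGroup

variable {G : Type*} [Group G] [Finite G] (hG : IsOCGroup G)

include hG

theorem sum_orderFreq_pow_lt_one_half {p N : ℕ} (hp : 2 ≤ p) (hN : 2 ≤ N) :
    ∑ i ∈ Finset.Ico 2 N, orderFreq G (p ^ i) < 1 / 2 :=
  calc ∑ i ∈ Finset.Ico 2 N, orderFreq G (p ^ i)
    _ ≤ ∑ i ∈ Finset.Ico 2 N, (1 / 2 : ℚ) ^ i := Finset.sum_le_sum fun i _ ↦ by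
      refine (hG.orderFreq_le_one_div (by positivity)).trans ?_
      rw [one_div_pow, Nat.cast_pow]
      gcongr
      exact_mod_cast hp
    _ < ∑ i ∈ Finset.Ico 2 (N + 1), (1 / 2 : ℚ) ^ i := by
      rw [Finset.sum_Ico_succ_top hN]
      exact lt_add_of_pos_right _ (by positivity)
    _ ≤ (1 / 2) ^ 2 / (1 - 1 / 2) := geom_sum_Ico_le_of_lt_one (by norm_num) (by norm_num)
    _ = 1 / 2 := by norm_num

theorem center_eq_bot_or_eq_top_of_isPGroup {p : ℕ} [hp : Fact p.Prime] (hP : IsPGroup p G) :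
    center G = ⊥ ∨ center G = ⊤ := by
  by_contra! h
  obtain ⟨hbot, htop⟩ := h
  obtain ⟨x, hx⟩ : ∃ x, x ∉ center G := by
    by_contra! hall
    exact htop ((eq_top_iff' _).2 hall)
  have hZ : 2 ≤ Nat.card (center G) := (one_lt_card_iff_ne_bot _).2 hbot
  have hN : 2 ≤ Nat.card G := hZ.trans (card_le_card_group _)
  have hp1 : orderFreq G (p ^ 1) ≤ 1 / (4 : ℕ) := hG.orderFreq_le (by norm_num) fun y hy _ ↦
    le_trans (by lia) (two_mul_card_center_le hy)
  have hcover : ∀ y ∉ (center G : Set G), ∃ i ∈ Finset.Ico 1 (Nat.card G),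
      y ∈ {g : G | g ∉ center G ∧ orderOf g = p ^ i} := fun y hy ↦ by
    obtain ⟨i, hi⟩ := IsPGroup.iff_orderOf.1 hP y
    refine ⟨i, Finset.mem_Ico.2 ⟨Nat.one_le_iff_ne_zero.2 ?_, ?_⟩, hy, hi⟩
    · rintro rfl
      exact hy (orderOf_eq_one_iff.1 (hi.trans (pow_zero p)) ▸ one_mem (center G))
    · exact (Nat.lt_pow_self hp.out.one_lt).trans_le
        (hi ▸ Nat.le_of_dvd Nat.card_pos (orderOf_dvd_natCard y))
  have htail := hG.sum_orderFreq_pow_lt_one_half hp.out.two_le hN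
  have hcenter := freq_center_le_one_fourth hx
  have htotal : 1 ≤ freq (center G : Set G) +
      ∑ i ∈ Finset.Ico 1 (Nat.card G), orderFreq G (p ^ i) :=
    one_le_freq_add_sum_freq _ _ hcover
  rw [Finset.sum_eq_sum_Ico_succ_bot hN] at htotal
  push_cast at hp1
  linarith

end IsOCGroup

/-! ### Reduction to a center of order two -/

theorem eq_one_of_odd_orderOf_of_sq_eq_one {G : Type*} [Monoid G] {x : G} (ho : Odd (orderOf x))
    (h : x ^ 2 = 1) : x = 1 := by
  rw [← orderOf_dvd_iff_pow_eq_one, Nat.dvd_prime Nat.prime_two, orderOf_eq_one_iff] at h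
  exact h.resolve_right fun h2 ↦ Nat.not_odd_iff_even.2 even_two (h2 ▸ ho)

theorem notMem_center_of_semiconjBy_inv {G : Type*} [Group G] {g x : G} (hx : x ∉ center G)
    (ho : Odd (orderOf x)) (h : SemiconjBy g x x⁻¹) : g ∉ center G := fun hg ↦ by
  have hinv : x = x⁻¹ := mul_right_cancel ((commute_of_mem_center hg x).eq.trans h.eq)
  refine hx (eq_one_of_odd_orderOf_of_sq_eq_one ho ?_ ▸ one_mem _)
  rwa [sq, mul_eq_one_iff_eq_inv]

/-- An OC-group whose center consists of `1` and an involution `z`: the shape of a non-trivial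
OC-group that has noncentral elements of odd order. -/
structure IsOCWithInvolution (G : Type*) [Group G] (z : G) : Prop where
  isOCGroup : IsOCGroup G
  orderOf_eq_two : orderOf z = 2
  mem_center_iff : ∀ g : G, g ∈ center G ↔ g = 1 ∨ g = z

namespace IsOCGroup

variable {G : Type*} [Group G] [Finite G] (hG : IsOCGroup G)

include hG

theorem exists_notMem_center_orderOf_eq_two_pow {x : G} (hx : x ∉ center G) :
    ∃ u ∉ center G, ∃ s, orderOf u = 2 ^ s := by
  by_cases hodd : ∃ y ∉ center G, Odd (orderOf y)
  · obtain ⟨y, hy, ho⟩ := hodd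
    obtain ⟨g, hg⟩ := hG.exists_semiconjBy_inv hy
    obtain ⟨u, -, hs, hu⟩ := exists_orderOf_eq_two_pow_semiconjBy (isOfFinOrder_of_finite g) hg
      (by simpa only [inv_inv] using hg.inv_right)
    exact ⟨u, notMem_center_of_semiconjBy_inv hy ho hu, hs⟩
  · obtain ⟨u, -, v, -, rfl, hs, hv⟩ := exists_two_part_mul_odd_part (isOfFinOrder_of_finite x)
    push Not at hodd
    have hvZ : v ∈ center G := by
      by_contra hvZ
      exact hodd v hvZ hv
    exact ⟨u, fun hu ↦ hx (mul_mem hu hvZ), hs⟩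

theorem eq_one_of_mem_center_of_odd {x c : G} (hx : x ∉ center G) (hc : c ∈ center G)
    (ho : Odd (orderOf c)) : c = 1 := by
  obtain ⟨u, hu, s, hs⟩ := hG.exists_notMem_center_orderOf_eq_two_pow hx
  have hcop : (orderOf u).Coprime (orderOf c) :=
    hs ▸ (Nat.coprime_two_left.2 ho).pow_left s
  exact eq_one_of_odd_orderOf_of_sq_eq_one ho (hG.sq_eq_one_of_mem_center hu hc hcop)

theorem isPGroup_two_of_odd_mem_center {x : G} (hx : x ∉ center G)
    (h : ∀ y : G, Odd (orderOf y) → y ∈ center G) : IsPGroup 2 G := by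
  refine IsPGroup.iff_orderOf.2 fun g ↦ ?_
  obtain ⟨u, -, v, -, rfl, hs, hv⟩ := exists_two_part_mul_odd_part (isOfFinOrder_of_finite g)
  rwa [hG.eq_one_of_mem_center_of_odd hx (h v hv) hv, mul_one]

theorem sq_eq_one_of_mem_center_of_odd {x c : G} (hx : x ∉ center G) (ho : Odd (orderOf x))
    (hc : c ∈ center G) : c ^ 2 = 1 := by
  obtain ⟨u, hu, v, hv, rfl, ⟨s, hs⟩, hvo⟩ :=
    exists_two_part_mul_odd_part (isOfFinOrder_of_finite c)
  have hle : zpowers (u * v) ≤ center G := zpowers_le.2 hc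
  rw [hG.eq_one_of_mem_center_of_odd hx (hle hv) hvo, mul_one]
  exact hG.sq_eq_one_of_mem_center hx (hle hu) (hs ▸ (Nat.coprime_two_right.2 ho).pow_right s)

theorem exists_isOCWithInvolution (hbot : center G ≠ ⊥) {x : G} (hx : x ∉ center G)
    (ho : Odd (orderOf x)) : ∃ z, IsOCWithInvolution G z := by
  obtain ⟨z, hz, hz1⟩ := (bot_or_exists_ne_one (center G)).resolve_left hbot
  have horder {c : G} (hc : c ∈ center G) (hc1 : c ≠ 1) : orderOf c = 2 :=
    orderOf_eq_prime (hG.sq_eq_one_of_mem_center_of_odd hx ho hc) hc1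
  refine ⟨z, hG, horder hz hz1, fun c ↦ ⟨fun hc ↦ ?_, ?_⟩⟩
  · refine or_iff_not_imp_left.2 fun hc1 ↦ ?_
    refine hG.eq_of_commute_of_mem_center hx (commute_of_mem_center hc x) hz
      ((horder hc hc1).trans (horder hz hz1).symm) ?_
    rw [horder hc hc1]
    exact Nat.coprime_two_right.2 ho
  · rintro (rfl | rfl)
    exacts [one_mem _, hz]

end IsOCGroup

theorem semiconjBy_mul_comm_of_sq_eq_one {G : Type*} [Group G] {c u z : G} (hz : z ∈ center G)
    (hz2 : z ^ 2 = 1) (h : SemiconjBy c u (z * u)) : SemiconjBy c (z * u) u := by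
  have h2 : SemiconjBy c (z * u) (z * (z * u)) :=
    SemiconjBy.mul_right (commute_of_mem_center hz c) h
  rwa [← mul_assoc, ← sq, hz2, one_mul] at h2

theorem mul_pow_of_semiconjBy_mul {G : Type*} [Group G] {c u z : G} (hz : z ∈ center G)
    (hz2 : z ^ 2 = 1) (h : SemiconjBy c u (z * u)) {n : ℕ} (hn : 4 ∣ n) :
    (c * u) ^ n = c ^ n * u ^ n := by
  have hcu : Commute (c ^ 2) u := by
    rw [sq]
    exact (semiconjBy_mul_comm_of_sq_eq_one hz hz2 h).mul_left h
  have hsq : (c * u) ^ 2 = z * (c ^ 2 * u ^ 2) :=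
    calc (c * u) ^ 2
      _ = z * (u * c ^ 2) * u := by
        rw [sq]
        nth_rw 1 [h.eq]
        simp only [sq, mul_assoc]
      _ = z * (c ^ 2 * u ^ 2) := by
        rw [← hcu.eq]
        simp only [sq, mul_assoc]
  obtain ⟨r, rfl⟩ := hn
  rw [show 4 * r = 2 * (2 * r) by lia, pow_mul, hsq, (commute_of_mem_center hz _).symm.mul_pow,
    pow_mul z, hz2, one_pow, one_mul, (hcu.pow_right 2).mul_pow, ← pow_mul, ← pow_mul]

namespace IsOCWithInvolution

variable {G : Type*} [Group G] {z : G} (hG : IsOCWithInvolution G z)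

include hG

theorem mem_center : z ∈ center G := (hG.mem_center_iff z).2 (Or.inr rfl)

theorem sq_eq_one : z ^ 2 = 1 := hG.orderOf_eq_two ▸ pow_orderOf_eq_one z

theorem ne_one : z ≠ 1 := fun h ↦ by
  have h2 := hG.orderOf_eq_two
  rw [h, orderOf_one] at h2
  lia

theorem card_center : Nat.card (center G) = 2 := by
  have hpair : (center G : Set G) = {1, z} := Set.ext hG.mem_center_iff
  rw [← Set.ncard_pair hG.ne_one.symm, ← hpair]
  rfl

theorem notMem_center_of_two_lt_orderOf {x : G} (h : 2 < orderOf x) : x ∉ center G := fun hx ↦ by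
  obtain rfl | rfl := (hG.mem_center_iff x).1 hx
  · rw [orderOf_one] at h
    lia
  · exact h.ne hG.orderOf_eq_two.symm

theorem notMem_center_of_odd {x : G} (hx : x ≠ 1) (ho : Odd (orderOf x)) : x ∉ center G :=
  fun hZ ↦ by
    obtain rfl | rfl := (hG.mem_center_iff x).1 hZ
    · exact hx rfl
    · exact Nat.not_odd_iff_even.2 even_two (hG.orderOf_eq_two ▸ ho)

theorem mem_center_of_commute_of_sq_eq_one {x t : G} (hx : x ∉ center G) (ho : Odd (orderOf x))
    (hxt : Commute x t) (ht : t ^ 2 = 1) : t ∈ center G := by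
  by_cases ht1 : t = 1
  · exact ht1 ▸ one_mem _
  · have ht2 : orderOf t = 2 := orderOf_eq_prime ht ht1
    have htz : t = z := hG.isOCGroup.eq_of_commute_of_mem_center hx hxt hG.mem_center
      (ht2.trans hG.orderOf_eq_two.symm) (ht2.symm ▸ Nat.coprime_two_right.2 ho)
    exact htz ▸ hG.mem_center

theorem pow_eq_of_commute_of_orderOf_eq_two_pow {x u : G} (hx : x ∉ center G)
    (ho : Odd (orderOf x)) (hxu : Commute x u) {m : ℕ} (hu : orderOf u = 2 ^ (m + 1)) :
    u ^ 2 ^ m = z := by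
  have hsq : (u ^ 2 ^ m) ^ 2 = 1 := by rw [← pow_mul, ← pow_succ, ← hu, pow_orderOf_eq_one]
  have hZ := hG.mem_center_of_commute_of_sq_eq_one hx ho (hxu.pow_right _) hsq
  refine ((hG.mem_center_iff _).1 hZ).resolve_left fun h1 ↦ ?_
  have hle : 2 ^ (m + 1) ≤ 2 ^ m := hu ▸ orderOf_le_of_pow_eq_one (by positivity) h1
  exact hle.not_gt (Nat.pow_lt_pow_succ one_lt_two)

-- Multiplying `c` by a suitable power of `u` lowers its order, which drives the induction.
theorem not_semiconjBy_mul_of_le {x c u : G} (hx : x ∉ center G) (ho : Odd (orderOf x))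
    (hxc : Commute x c) (hxu : Commute x u) {s m : ℕ} (hc : orderOf c = 2 ^ s)
    (hu : orderOf u = 2 ^ m) (hsm : s ≤ m) (hm : 3 ≤ m) : ¬ SemiconjBy c u (z * u) := by
  intro h
  induction s using Nat.strong_induction_on generalizing c with
  | _ s ih =>
    obtain _ | s := s
    · obtain rfl : c = 1 := orderOf_eq_one_iff.1 hc
      have hzu : u = z * u := by simpa only [SemiconjBy, one_mul, mul_one] using h
      exact hG.ne_one (mul_eq_right.1 hzu.symm)
    set v := u ^ 2 ^ (m - (s + 1)) with hv
    have hcz : c ^ 2 ^ s = z := hG.pow_eq_of_commute_of_orderOf_eq_two_pow hx ho hxc hc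
    have hvz : v ^ 2 ^ s = z := by
      rw [hv, ← pow_mul, ← pow_add]
      refine hG.pow_eq_of_commute_of_orderOf_eq_two_pow hx ho hxu (hu.trans ?_)
      congr 1
      lia
    have hmul : (c * v) ^ 2 ^ s = c ^ 2 ^ s * v ^ 2 ^ s := by
      obtain rfl | hlt := hsm.eq_or_lt
      · rw [hv, Nat.sub_self, pow_zero, pow_one]
        exact mul_pow_of_semiconjBy_mul hG.mem_center hG.sq_eq_one h
          (pow_dvd_pow 2 (by lia : 2 ≤ s))
      · have hcu : Commute c (u ^ 2) := by
          have h2 := h.pow_right 2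
          rwa [(commute_of_mem_center hG.mem_center u).symm.mul_pow, hG.sq_eq_one, one_mul] at h2
        obtain ⟨d, hd⟩ := Nat.exists_eq_add_of_lt hlt
        rw [hv, hd, show s + 1 + d + 1 - (s + 1) = d + 1 by lia, pow_succ', pow_mul u]
        exact (hcu.pow_right _).mul_pow _
    have hone : (c * v) ^ 2 ^ s = 1 := by rw [hmul, hcz, hvz, ← sq, hG.sq_eq_one]
    obtain ⟨t, hts, ht⟩ := (Nat.dvd_prime_pow Nat.prime_two).1 (orderOf_dvd_of_pow_eq_one hone)
    exact ih t (by lia) (hxc.mul_right (hxu.pow_right _)) ht (by lia)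
      (h.mul_left (Commute.pow_self u _))

end IsOCWithInvolution

theorem semiconjBy_mul_swap_of_sq_eq_one {G : Type*} [Group G] {c u z : G} (hz : z ∈ center G)
    (hz2 : z ^ 2 = 1) (h : SemiconjBy c u (z * u)) : SemiconjBy u c (z * c) := by
  rw [SemiconjBy, ← (semiconjBy_mul_comm_of_sq_eq_one hz hz2 h).eq, ← mul_assoc,
    (commute_of_mem_center hz c).eq]

namespace IsOCWithInvolution

variable {G : Type*} [Group G] {z : G} (hG : IsOCWithInvolution G z)

include hG

theorem le_two_of_commute_of_orderOf_eq_two_pow [Finite G] {x u : G} (hx : x ∉ center G)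
    (ho : Odd (orderOf x)) (hxu : Commute x u) {m : ℕ} (hu : orderOf u = 2 ^ m) : m ≤ 2 := by
  by_contra! hm
  obtain ⟨k, rfl⟩ := Nat.exists_eq_add_of_lt hm
  have hzu : z * u = u ^ (2 ^ (2 + k) + 1) := by
    rw [pow_succ, hG.pow_eq_of_commute_of_orderOf_eq_two_pow hx ho hxu hu]
  have hcop : (orderOf u).Coprime (2 ^ (2 + k) + 1) := by
    rw [hu]
    exact (Nat.coprime_two_left.2 (even_two.pow_of_ne_zero (by lia)).add_one).pow_left _
  obtain ⟨g, hgx, hgu⟩ := hG.isOCGroup.exists_semiconjBy_pair hx hx hxu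
    (hzu ▸ hxu.pow_right _ : Commute x (z * u)) rfl (hzu ▸ hcop.orderOf_pow.symm)
    (hu ▸ (Nat.coprime_two_right.2 ho).pow_right _)
  obtain ⟨c, hcg, ⟨s, hs⟩, hcu⟩ := exists_orderOf_eq_two_pow_semiconjBy (isOfFinOrder_of_finite g)
    hgu (semiconjBy_mul_comm_of_sq_eq_one hG.mem_center hG.sq_eq_one hgu)
  have hxc : Commute x c := commute_of_mem_zpowers hcg (Commute.symm hgx)
  obtain hle | hle := le_total s (2 + k + 1)
  · exact hG.not_semiconjBy_mul_of_le hx ho hxc hxu hs hu hle hm hcu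
  · exact hG.not_semiconjBy_mul_of_le hx ho hxu hxc hu hs hle (hm.trans_le hle)
      (semiconjBy_mul_swap_of_sq_eq_one hG.mem_center hG.sq_eq_one hcu)

variable [Finite G]

theorem sq_eq_of_commute {x u : G} (hx : x ∉ center G) (ho : Odd (orderOf x)) (hxu : Commute x u)
    (hu : u ∉ center G) (hu2 : ∃ m, orderOf u = 2 ^ m) : u ^ 2 = z ∧ orderOf u = 4 := by
  obtain ⟨m, hm⟩ := hu2
  have hm2 := hG.le_two_of_commute_of_orderOf_eq_two_pow hx ho hxu hm
  obtain rfl : m = 2 := by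
    refine hm2.antisymm (not_lt.1 fun hlt ↦ hu ?_)
    refine hG.mem_center_of_commute_of_sq_eq_one hx ho hxu (orderOf_dvd_iff_pow_eq_one.1 ?_)
    rw [hm]
    exact pow_dvd_pow 2 (Nat.lt_succ_iff.1 hlt)
  exact ⟨hG.pow_eq_of_commute_of_orderOf_eq_two_pow (m := 1) hx ho hxu hm, hm⟩

theorem mem_zpowers_of_commute {x i b : G} (hx : x ∉ center G) (ho : Odd (orderOf x))
    (hxi : Commute x i) (hi : orderOf i = 4) (hxb : Commute x b) (hbi : Commute b i)
    (hb : ∃ m, orderOf b = 2 ^ m) : b ∈ zpowers i := by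
  have hiZ : i ∉ center G := hG.notMem_center_of_two_lt_orderOf (by lia)
  have hi2 : i ^ 2 = z := (hG.sq_eq_of_commute hx ho hxi hiZ ⟨2, hi⟩).1
  have hcenter {c : G} (hc : c ∈ center G) : c ∈ zpowers i := by
    obtain rfl | rfl := (hG.mem_center_iff c).1 hc
    exacts [one_mem _, hi2 ▸ npow_mem_zpowers i 2]
  by_cases hbZ : b ∈ center G
  · exact hcenter hbZ
  have hb2 : b ^ 2 = z := (hG.sq_eq_of_commute hx ho hxb hbZ hb).1
  have hbi2 : (b * i) ^ 2 = 1 := by rw [hbi.mul_pow, hb2, hi2, ← sq, hG.sq_eq_one]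
  have hmem := hG.mem_center_of_commute_of_sq_eq_one hx ho (hxb.mul_right hxi) hbi2
  exact (mul_mem_cancel_right (mem_zpowers i)).1 (hcenter hmem)

end IsOCWithInvolution

/-! ### Odd element orders -/

section Conjugation

variable {G : Type*} [Group G]

theorem not_commute_of_even_orderOf {u w x : G} {k : ℕ} (huw : Commute u w)
    (hw : Odd (orderOf w)) (h : SemiconjBy (u * w) x (x ^ k))
    (hk : Even (orderOf (k : ZMod (orderOf x)))) : ¬ Commute u x := fun hux ↦ by
  have hpow : (u * w) ^ orderOf w = u ^ orderOf w := by
    rw [huw.mul_pow, pow_orderOf_eq_one, mul_one]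
  have hdvd := (commute_pow_iff_orderOf_dvd h (orderOf w)).1 (hpow ▸ hux.pow_left _)
  exact Nat.not_odd_iff_even.2 hk (hw.of_dvd_nat hdvd)

theorem commute_pow_of_modEq_one {g x : G} {k a b : ℕ} (h : SemiconjBy g x (x ^ k))
    (hx : orderOf x = a * b) (hk : k ≡ 1 [MOD b]) : Commute g (x ^ a) := by
  have ha : SemiconjBy g (x ^ a) ((x ^ k) ^ a) := h.pow_right a
  have hpow : (x ^ k) ^ a = x ^ a := by
    rw [← pow_mul, pow_eq_pow_iff_modEq, hx, mul_comm k]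
    simpa only [mul_one] using hk.mul_left' a
  rwa [hpow] at ha

theorem isPGroup_two_of_even_orderOf {t : G} (ht : orderOf t = 2) (htZ : t ∈ center G)
    (h : ∀ g : G, Even (orderOf g) → ∃ s, g ^ 2 ^ s = 1) : IsPGroup 2 G := fun g ↦ by
  obtain he | ho := Nat.even_or_odd (orderOf g)
  · exact h g he
  · have horder : orderOf (t * g) = 2 * orderOf g := by
      rw [(commute_of_mem_center htZ g).symm.orderOf_mul_eq_mul_orderOf_of_coprime
        (ht ▸ Nat.coprime_two_left.2 ho), ht]
    obtain ⟨s, hs⟩ := h (t * g) (horder ▸ even_two_mul _)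
    exact ⟨s, orderOf_dvd_iff_pow_eq_one.1
      ((horder ▸ Nat.dvd_mul_left _ _).trans (orderOf_dvd_of_pow_eq_one hs))⟩

end Conjugation

theorem exists_even_orderOf_and_modEq_one {a b : ℕ} (hab : a.Coprime b) (ha : 2 < a) :
    ∃ k : ℕ, k.Coprime (a * b) ∧ Even (orderOf (k : ZMod (a * b))) ∧ k ≡ 1 [MOD b] := by
  obtain ⟨k, hk, hka, hkb⟩ := exists_coprime_natCast_eq_and_modEq_one hab
    ((Nat.coprime_self_sub_left (by lia)).2 (Nat.coprime_one_left a) : (a - 1).Coprime a)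
  have : Fact (2 < a) := ⟨ha⟩
  have hneg : (k : ZMod a) = -1 := by
    rw [hka, Nat.cast_sub (by lia), ZMod.natCast_self, Nat.cast_one, zero_sub]
  have horder : orderOf (k : ZMod a) = 2 := by
    rw [hneg]
    exact orderOf_eq_prime neg_one_sq ZMod.neg_one_ne_one
  refine ⟨k, hk, even_iff_two_dvd.2 ?_, hkb⟩
  rw [← horder]
  exact orderOf_natCast_zmod_dvd_of_dvd (Nat.dvd_mul_right a b) k

/-- An odd number `n > 1` such that some element of order `n` commutes with an element of order `4`,
encoded as an element of order `4 * n`. These are the odd orders with the largest centralizers. -/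
def IsQuarticOrder (G : Type*) [Group G] (n : ℕ) : Prop :=
  1 < n ∧ Odd n ∧ ∃ g : G, orderOf g = 4 * n

section QuarticOrder

variable {G : Type*} [Group G] {n : ℕ}

theorem IsQuarticOrder.two_lt (h : IsQuarticOrder G n) : 2 < n :=
  two_lt_of_odd_of_one_lt h.2.1 h.1

theorem IsQuarticOrder.exists_commute (h : IsQuarticOrder G n) :
    ∃ x i : G, Commute x i ∧ orderOf x = n ∧ orderOf i = 4 := by
  obtain ⟨hn, ho, g, hg⟩ := h
  obtain ⟨i, hi, x, hx, -, hi4, hxn⟩ := exists_mul_eq_of_orderOf_eq_mul hg (by lia)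
    ((Nat.coprime_two_left.2 ho).pow_left 2)
  exact ⟨x, i, commute_of_mem_zpowers_of_mem_zpowers hx hi, hxn, hi4⟩

theorem isQuarticOrder_orderOf {x i : G} (hx : x ≠ 1) (ho : Odd (orderOf x)) (h : Commute x i)
    (hi : orderOf i = 4) : IsQuarticOrder G (orderOf x) := by
  have hcop : (orderOf i).Coprime (orderOf x) := by
    rw [hi]
    exact (Nat.coprime_two_left.2 ho).pow_left 2
  have hpos := ho.pos
  have hne : orderOf x ≠ 1 := fun h1 ↦ hx (orderOf_eq_one_iff.1 h1)
  exact ⟨by lia, ho, i * x, by rw [h.symm.orderOf_mul_eq_mul_orderOf_of_coprime hcop, hi]⟩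

end QuarticOrder

namespace IsOCWithInvolution

variable {G : Type*} [Group G] [Finite G] {z : G} (hG : IsOCWithInvolution G z)

include hG

theorem eq_one_of_commute_of_even {g x i v : G} {k : ℕ} (hi : orderOf i = 4) (hxi : Commute x i)
    (hgi : Commute g i) (h : SemiconjBy g x (x ^ k))
    (hk : Even (orderOf (k : ZMod (orderOf x)))) (ho : Odd (orderOf v)) (hvg : Commute v g)
    (hvi : Commute v i) : v = 1 := by
  by_contra hv
  obtain ⟨u, hu, w, hw, rfl, hu2, hwo⟩ := exists_two_part_mul_odd_part (isOfFinOrder_of_finite g)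
  have hui : u ∈ zpowers i := hG.mem_zpowers_of_commute (hG.notMem_center_of_odd hv ho) ho hvi hi
    (commute_of_mem_zpowers hu hvg) (commute_of_mem_zpowers hu hgi.symm).symm hu2
  have huw : Commute u w := commute_of_mem_zpowers_of_mem_zpowers hu hw
  exact not_commute_of_even_orderOf huw hwo h hk (commute_of_mem_zpowers hui hxi).symm

theorem isQuarticOrder_and_orderOf_dvd {u w x y : G} {k : ℕ} (huw : Commute u w)
    (hu : ∃ s, orderOf u = 2 ^ s) (hw : Odd (orderOf w)) (h : SemiconjBy (u * w) x (x ^ k))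
    (hk : Even (orderOf (k : ZMod (orderOf x)))) (hy : y ≠ 1) (ho : Odd (orderOf y))
    (hyu : Commute y u) :
    IsQuarticOrder G (orderOf y) ∧ orderOf (k : ZMod (orderOf x)) ∣ 2 * orderOf w := by
  have huZ : u ∉ center G := fun huZ ↦
    not_commute_of_even_orderOf huw hw h hk (commute_of_mem_center huZ x).symm
  obtain ⟨huz, hu4⟩ := hG.sq_eq_of_commute (hG.notMem_center_of_odd hy ho) ho hyu huZ hu
  refine ⟨isQuarticOrder_orderOf hy ho hyu hu4, ?_⟩
  have hpow : (u * w) ^ (2 * orderOf w) = z ^ orderOf w := by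
    rw [huw.mul_pow, pow_mul u, huz, mul_comm 2, pow_mul w, pow_orderOf_eq_one, one_pow, mul_one]
  rw [← commute_pow_iff_orderOf_dvd h, hpow]
  exact (commute_of_mem_center hG.mem_center x).symm.pow_left _

omit [Finite G] in
theorem exists_commute_and_semiconjBy_pow {x i : G} (hn : IsQuarticOrder G (orderOf x))
    (hxi : Commute x i) (hi : orderOf i = 4) {k : ℕ} (hk : (orderOf x).Coprime k) :
    ∃ g, SemiconjBy g x (x ^ k) ∧ Commute g i := by
  have hxZ := hG.notMem_center_of_two_lt_orderOf hn.two_lt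
  have hxkZ : x ^ k ∉ center G :=
    hG.notMem_center_of_two_lt_orderOf (hk.orderOf_pow.symm ▸ hn.two_lt)
  exact hG.isOCGroup.exists_semiconjBy_pair hxZ hxkZ hxi (hxi.pow_left k)
    hk.orderOf_pow.symm rfl (hi ▸ (Nat.coprime_two_right.2 hn.2.1).pow_right 2)

theorem exists_pow_two_pow_eq_one_of_even {n : ℕ} (hn : IsQuarticOrder G n) (κ : (ZMod n)ˣ)
    (hκ : Even (orderOf κ)) : ∃ s, κ ^ 2 ^ s = 1 := by
  have : NeZero n := ⟨(zero_lt_one.trans hn.1).ne'⟩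
  obtain ⟨x, i, hxi, rfl, hi⟩ := hn.exists_commute
  set k := (κ : ZMod (orderOf x)).val
  have hk : orderOf (k : ZMod (orderOf x)) = orderOf κ := by
    rw [ZMod.natCast_zmod_val, orderOf_units]
  obtain ⟨g, hgx, hgi⟩ :=
    hG.exists_commute_and_semiconjBy_pow hn hxi hi (ZMod.val_coe_unit_coprime κ).symm
  obtain ⟨u, -, v, hv, huv, ⟨s, hs⟩, hvo⟩ :=
    exists_two_part_mul_odd_part (isOfFinOrder_of_finite g)
  have hv1 : v = 1 := hG.eq_one_of_commute_of_even hi hxi hgi hgx (hk ▸ hκ) hvo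
    (commute_of_mem_zpowers hv (Commute.refl g)).symm
    (commute_of_mem_zpowers hv (Commute.symm hgi)).symm
  refine ⟨s, orderOf_dvd_iff_pow_eq_one.1 ?_⟩
  rw [← hk, ← commute_pow_iff_orderOf_dvd hgx, ← huv, hv1, mul_one, ← hs, pow_orderOf_eq_one]
  exact Commute.one_left x

theorem exists_totient_eq_two_pow {n : ℕ} (hn : IsQuarticOrder G n) :
    ∃ k, n.totient = 2 ^ k := by
  have : NeZero n := ⟨(zero_lt_one.trans hn.1).ne'⟩
  have : Fact (2 < n) := ⟨hn.two_lt⟩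
  have hneg : orderOf (-1 : (ZMod n)ˣ) = 2 := by
    rw [← orderOf_units, Units.val_neg, Units.val_one]
    exact orderOf_eq_prime neg_one_sq ZMod.neg_one_ne_one
  have hP : IsPGroup 2 (ZMod n)ˣ :=
    isPGroup_two_of_even_orderOf hneg (Subgroup.mem_center_iff.2 fun g ↦ mul_comm g _)
      (hG.exists_pow_two_pow_eq_one_of_even hn)
  obtain ⟨k, hk⟩ := IsPGroup.iff_card.1 hP
  exact ⟨k, by rw [← hk, Nat.card_eq_fintype_card, ZMod.card_units_eq_totient]⟩

theorem not_isQuarticOrder_mul {a b : ℕ} (ha : 1 < a) (hb : 1 < b) (hab : a.Coprime b) :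
    ¬ IsQuarticOrder G (a * b) := fun hn ↦ by
  obtain ⟨hao, hbo⟩ := Nat.odd_mul.1 hn.2.1
  obtain ⟨x, i, hxi, hx, hi⟩ := hn.exists_commute
  obtain ⟨k, hk, heven, hkb⟩ := exists_even_orderOf_and_modEq_one hab
    (two_lt_of_odd_of_one_lt hao ha)
  obtain ⟨g, hgx, hgi⟩ :=
    hG.exists_commute_and_semiconjBy_pow (hx ▸ hn) hxi hi (hx ▸ hk.symm)
  have hxa : orderOf (x ^ a) = b := orderOf_pow_eq_of_orderOf_eq_mul (by lia) hx
  have hxa1 : x ^ a = 1 := hG.eq_one_of_commute_of_even hi hxi hgi hgx (hx ▸ heven) (hxa ▸ hbo)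
    (commute_pow_of_modEq_one hgx hx hkb).symm (hxi.pow_left a)
  rw [hxa1, orderOf_one] at hxa
  exact hb.ne hxa

theorem prime_and_eq_fermatNumber_of_isQuarticOrder {n : ℕ} (hn : IsQuarticOrder G n) :
    n.Prime ∧ ∃ t, n = Nat.fermatNumber t := by
  obtain ⟨p, e, hp, he, rfl⟩ | ⟨a, b, ha, hb, hab, rfl⟩ := exists_prime_pow_or_coprime_mul hn.1
  · obtain ⟨k, hk⟩ := hG.exists_totient_eq_two_pow hn
    exact exists_eq_fermatNumber_of_totient_prime_pow hp ((Nat.odd_pow_iff he).1 hn.2.1) he hk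
  · exact absurd hn (hG.not_isQuarticOrder_mul ha hb hab)

theorem isQuarticOrder_and_not_four_dvd {x : G} {a b k : ℕ} (hx : orderOf x = a * b)
    (ho : Odd (a * b)) (hb : 1 < b) (hk : k.Coprime (a * b))
    (heven : Even (orderOf (k : ZMod (a * b)))) (hkb : k ≡ 1 [MOD b]) :
    IsQuarticOrder G b ∧ ¬ 4 ∣ orderOf (k : ZMod (a * b)) := by
  obtain ⟨hao, hbo⟩ := Nat.odd_mul.1 ho
  have hxa : orderOf (x ^ a) = b := orderOf_pow_eq_of_orderOf_eq_mul hao.pos.ne' hx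
  have hxa1 : x ^ a ≠ 1 := fun h ↦ by
    rw [h, orderOf_one] at hxa
    exact hb.ne hxa
  have hx1 : x ≠ 1 := fun h ↦ hxa1 (by rw [h, one_pow])
  obtain ⟨g, hg⟩ := hG.isOCGroup.exists_semiconjBy_pow
    (hG.notMem_center_of_odd hx1 (hx ▸ ho)) (hx ▸ hk.symm)
  obtain ⟨u, hu, w, hw, rfl, hu2, hwo⟩ := exists_two_part_mul_odd_part (isOfFinOrder_of_finite g)
  obtain ⟨hquartic, hdvd⟩ := hG.isQuarticOrder_and_orderOf_dvd
    (commute_of_mem_zpowers_of_mem_zpowers hu hw) hu2 hwo hg (hx ▸ heven) hxa1 (hxa ▸ hbo)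
    (commute_of_mem_zpowers hu (commute_pow_of_modEq_one hg hx hkb).symm)
  rw [hx] at hdvd
  refine ⟨hxa ▸ hquartic, fun h4 ↦ Nat.not_even_iff_odd.2 hwo (even_iff_two_dvd.2 ?_)⟩
  exact Nat.dvd_of_mul_dvd_mul_left two_pos (h4.trans hdvd)

theorem isQuarticOrder_of_orderOf_eq_mul {x : G} {a b : ℕ} (hx : orderOf x = a * b)
    (ho : Odd (a * b)) (ha : 1 < a) (hb : 1 < b) (hab : a.Coprime b) : IsQuarticOrder G b := by
  obtain ⟨k, hk, heven, hkb⟩ :=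
    exists_even_orderOf_and_modEq_one hab (two_lt_of_odd_of_one_lt (Nat.odd_mul.1 ho).1 ha)
  exact (hG.isQuarticOrder_and_not_four_dvd hx ho hb hk heven hkb).1

theorem orderOf_ne_fermatNumber_mul {x : G} {t b : ℕ} (ht : t ≠ 0) (hb : 1 < b) (hbo : Odd b)
    (hcop : (Nat.fermatNumber t).Coprime b) : orderOf x ≠ Nat.fermatNumber t * b := fun hx ↦ by
  obtain ⟨k, hk, hkt, hkb⟩ :=
    exists_coprime_natCast_eq_and_modEq_one hcop (two_pow_coprime_fermatNumber t (2 ^ (t - 1)))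
  have : Fact (2 < Nat.fermatNumber t) := ⟨Nat.two_lt_fermatNumber t⟩
  have hneg : (k : ZMod (Nat.fermatNumber t)) ^ 2 ^ 1 = -1 := by
    rw [hkt, natCast_two_pow_pow_eq_neg_one (Nat.one_le_iff_ne_zero.2 ht)]
  have h4 : 4 ∣ orderOf (k : ZMod (Nat.fermatNumber t * b)) := by
    have horder := orderOf_eq_two_pow_of_pow_eq_neg_one ZMod.neg_one_ne_one hneg
    rw [show 4 = 2 ^ (1 + 1) from rfl, ← horder]
    exact orderOf_natCast_zmod_dvd_of_dvd (Nat.dvd_mul_right _ b) k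
  exact (hG.isQuarticOrder_and_not_four_dvd hx ((Nat.odd_fermatNumber t).mul hbo) hb hk
    (even_iff_two_dvd.2 (Dvd.dvd.trans ⟨2, rfl⟩ h4)) hkb).2 h4

theorem orderOf_ne_mul {x : G} {a b : ℕ} (ho : Odd (a * b)) (ha : 1 < a) (hb : 1 < b)
    (hab : a.Coprime b) : orderOf x ≠ a * b := fun hx ↦ by
  have hx' : orderOf x = b * a := by rw [hx, mul_comm]
  have ho' : Odd (b * a) := by rwa [mul_comm]
  obtain ⟨-, s, rfl⟩ := hG.prime_and_eq_fermatNumber_of_isQuarticOrder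
    (hG.isQuarticOrder_of_orderOf_eq_mul hx' ho' hb ha hab.symm)
  obtain ⟨-, t, rfl⟩ := hG.prime_and_eq_fermatNumber_of_isQuarticOrder
    (hG.isQuarticOrder_of_orderOf_eq_mul hx ho ha hb hab)
  by_cases hs : s = 0
  · have ht : t ≠ 0 := fun ht ↦ by
      rw [hs, ht, Nat.coprime_self] at hab
      exact absurd hab (by decide)
    exact hG.orderOf_ne_fermatNumber_mul ht ha (Nat.odd_fermatNumber s) hab.symm hx'
  · exact hG.orderOf_ne_fermatNumber_mul hs hb (Nat.odd_fermatNumber t) hab hx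

theorem exists_totient_dvd {x : G} {p e : ℕ} (hp : p.Prime) (hodd : Odd p) (he : e ≠ 0)
    (hx : orderOf x = p ^ e) :
    (∃ s, (p ^ e).totient ∣ 2 ^ s) ∨
      ∃ l, IsQuarticOrder G l ∧ (p ^ e).totient ∣ 2 * l := by
  have hne2 : p ≠ 2 := fun h ↦ Nat.not_odd_iff_even.2 even_two (h ▸ hodd)
  have hgt : 2 < p ^ e := two_lt_of_odd_of_one_lt hodd.pow (Nat.one_lt_pow he hp.one_lt)
  have hxZ := hG.notMem_center_of_two_lt_orderOf (hx ▸ hgt)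
  have : NeZero (p ^ e) := ⟨(pow_pos hp.pos e).ne'⟩
  have := ZMod.isCyclic_units_of_prime_pow p hp hne2 e
  obtain ⟨κ, hκ⟩ := IsCyclic.exists_generator (α := (ZMod (p ^ e))ˣ)
  have hk : orderOf ((κ : ZMod (p ^ e)).val : ZMod (orderOf x)) = (p ^ e).totient := by
    rw [hx, ZMod.natCast_zmod_val, orderOf_units, orderOf_eq_card_of_forall_mem_zpowers hκ,
      Nat.card_eq_fintype_card, ZMod.card_units_eq_totient]
  have heven := Nat.totient_even hgt
  have hcop : (orderOf x).Coprime (κ : ZMod (p ^ e)).val := by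
    rw [hx]
    exact (ZMod.val_coe_unit_coprime κ).symm
  obtain ⟨g, hg⟩ := hG.isOCGroup.exists_semiconjBy_pow hxZ hcop
  obtain ⟨u, hu, w, hw, rfl, ⟨s, hs⟩, hwo⟩ :=
    exists_two_part_mul_odd_part (isOfFinOrder_of_finite g)
  have huw := commute_of_mem_zpowers_of_mem_zpowers hu hw
  by_cases hw1 : w = 1
  · refine .inl ⟨s, ?_⟩
    rw [← hk, ← commute_pow_iff_orderOf_dvd hg, hw1, mul_one, ← hs, pow_orderOf_eq_one]
    exact Commute.one_left x
  · obtain ⟨hl, hdvd⟩ := hG.isQuarticOrder_and_orderOf_dvd huw ⟨s, hs⟩ hwo hg (hk ▸ heven) hw1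
      hwo huw.symm
    exact .inr ⟨orderOf w, hl, hk ▸ hdvd⟩

theorem orderOf_prime_pow_cases {x : G} {p e : ℕ} (hp : p.Prime) (hodd : Odd p) (he : e ≠ 0)
    (hx : orderOf x = p ^ e) :
    (∃ t, p ^ e = Nat.fermatNumber t) ∨ (p ^ e = 7 ∨ p ^ e = 9) ∧ IsQuarticOrder G 3 ∨
      p ^ e = 11 ∧ IsQuarticOrder G 5 := by
  obtain ⟨s, hs⟩ | ⟨l, hl, hdvd⟩ := hG.exists_totient_dvd hp hodd he hx
  · obtain ⟨k, -, hk⟩ := (Nat.dvd_prime_pow Nat.prime_two).1 hs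
    exact .inl (exists_eq_fermatNumber_of_totient_prime_pow hp hodd he hk).2
  have hgt : 2 < p ^ e := two_lt_of_odd_of_one_lt hodd.pow (Nat.one_lt_pow he hp.one_lt)
  obtain ⟨m, hm⟩ := (Nat.totient_even hgt).two_dvd
  obtain ⟨hlp, t, rfl⟩ := hG.prime_and_eq_fermatNumber_of_isQuarticOrder hl
  rw [hm] at hdvd
  obtain rfl | rfl := (Nat.dvd_prime hlp).1 (Nat.dvd_of_mul_dvd_mul_left two_pos hdvd)
  · exact .inl (exists_eq_fermatNumber_of_totient_prime_pow (k := 1) hp hodd he hm).2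
  obtain ⟨hprime, heq⟩ | ⟨h9, hl3⟩ := totient_prime_pow_eq_two_mul_prime hp hodd he hlp hm
  · have ht := lt_two_of_prime_two_mul_fermatNumber_add_one (heq ▸ hprime)
    interval_cases t
    · exact .inr (.inl ⟨.inl heq, hl⟩)
    · exact .inr (.inr ⟨heq, hl⟩)
  · exact .inr (.inl ⟨.inr h9, hl3 ▸ hl⟩)

theorem orderOf_cases_of_odd {x : G} (hx : x ≠ 1) (ho : Odd (orderOf x)) :
    (∃ t, orderOf x = Nat.fermatNumber t) ∨
      (orderOf x = 7 ∨ orderOf x = 9) ∧ IsQuarticOrder G 3 ∨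
      orderOf x = 11 ∧ IsQuarticOrder G 5 := by
  have h1 : 1 < orderOf x :=
    lt_of_le_of_ne ho.pos fun h ↦ hx (orderOf_eq_one_iff.1 h.symm)
  obtain ⟨p, e, hp, he, hpe⟩ | ⟨a, b, ha, hb, hab, h⟩ := exists_prime_pow_or_coprime_mul h1
  · have hodd : Odd p := (Nat.odd_pow_iff he).1 (hpe ▸ ho)
    rw [hpe]
    exact hG.orderOf_prime_pow_cases hp hodd he hpe
  · exact absurd h (hG.orderOf_ne_mul (h ▸ ho) ha hb hab)

end IsOCWithInvolution

/-! ### Centralizer orders and class proportions -/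

theorem IsOCGroup.card_centralizer_eq {G : Type*} [Group G] [Finite G] (hG : IsOCGroup G) {x y : G}
    (hx : x ∉ center G) (hy : y ∉ center G) (h : orderOf x = orderOf y) :
    Nat.card (centralizer {x}) = Nat.card (centralizer {y}) := by
  have hfreq : (1 : ℚ) / Nat.card (centralizer {x}) = 1 / Nat.card (centralizer {y}) := by
    rw [← hG.orderFreq_orderOf hx, ← hG.orderFreq_orderOf hy, h]
  simpa only [one_div, inv_inj, Nat.cast_inj] using hfreq

namespace IsOCWithInvolution

variable {G : Type*} [Group G] [Finite G] {z : G} (hG : IsOCWithInvolution G z)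

include hG

theorem card_centralizer_sq_le {y : G} {n : ℕ} (hn : 1 < n) (ho : Odd n)
    (hy : orderOf y = 2 * n) :
    Nat.card (centralizer {y ^ 2}) ≤ Nat.card (centralizer {y}) := by
  have hy2 : orderOf (y ^ 2) = n := orderOf_pow_eq_of_orderOf_eq_mul two_ne_zero hy
  have hynZ : y ^ n ∈ center G :=
    hG.mem_center_of_commute_of_sq_eq_one (x := y ^ 2)
      (hG.notMem_center_of_two_lt_orderOf (hy2 ▸ two_lt_of_odd_of_one_lt ho hn)) (hy2 ▸ ho)
      (Commute.pow_pow_self y 2 n) (by rw [← pow_mul, mul_comm, ← hy, pow_orderOf_eq_one])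
  obtain ⟨k, rfl⟩ := ho
  refine card_le_of_le fun g hg ↦ mem_centralizer_singleton_iff.2 ?_
  have hg2 : Commute g (y ^ 2) := mem_centralizer_singleton_iff.1 hg
  have hgy : Commute g (y * (y ^ 2) ^ k) := by
    rw [← pow_mul, ← pow_succ']
    exact commute_of_mem_center hynZ g
  have hcomm := hgy.mul_right (hg2.pow_right k).inv_right
  rwa [mul_inv_cancel_right] at hcomm

omit [Finite G] in
theorem two_mul_orderOf_dvd_card_centralizer {x : G} (ho : Odd (orderOf x)) :
    2 * orderOf x ∣ Nat.card (centralizer {x}) := by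
  have hzx := (commute_of_mem_center hG.mem_center x).symm
  have horder : orderOf (z * x) = 2 * orderOf x := by
    rw [hzx.orderOf_mul_eq_mul_orderOf_of_coprime
      (hG.orderOf_eq_two ▸ Nat.coprime_two_left.2 ho), hG.orderOf_eq_two]
  exact horder ▸ orderOf_dvd_card_centralizer (hzx.mul_left (Commute.refl x))

theorem eight_dvd_card_centralizer {x i : G} (hx : x ∉ center G) (ho : Odd (orderOf x))
    (hxi : Commute x i) (hi : orderOf i = 4) : 8 ∣ Nat.card (centralizer {x}) := by
  have hcop : (orderOf x).Coprime (orderOf i) :=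
    hi ▸ (Nat.coprime_two_right.2 ho).pow_right 2
  obtain ⟨g, hgx, hgi⟩ := hG.isOCGroup.exists_semiconjBy_pair hx hx hxi hxi.inv_right rfl
    (orderOf_inv i).symm hcop
  have hgi' : SemiconjBy g i⁻¹ i := by simpa only [inv_inv] using hgi.inv_right
  obtain ⟨h, hh, ⟨s, hs⟩, hinv⟩ :=
    exists_orderOf_eq_two_pow_semiconjBy (isOfFinOrder_of_finite g) hgi hgi'
  have hinv' : SemiconjBy h i⁻¹ i := by simpa only [inv_inv] using hinv.inv_right
  have hxh : Commute x h := commute_of_mem_zpowers hh (Commute.symm hgx)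
  have hh2 : h ^ 2 ∈ zpowers i := by
    refine hG.mem_zpowers_of_commute hx ho hxi hi (hxh.pow_right 2)
      (pow_two h ▸ hinv'.mul_left hinv) ?_
    obtain ⟨m, -, hm⟩ := (Nat.dvd_prime_pow Nat.prime_two).1 (hs ▸ orderOf_pow_dvd (x := h) 2)
    exact ⟨m, hm⟩
  exact eight_dvd_card_of_semiconjBy_inv hi (mem_centralizer_singleton_iff.2 hxi.symm)
    (mem_centralizer_singleton_iff.2 hxh.symm) hinv hh2

theorem eight_mul_dvd_card_centralizer {x : G} (hx : IsQuarticOrder G (orderOf x)) :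
    8 * orderOf x ∣ Nat.card (centralizer {x}) := by
  obtain ⟨y, i, hyi, hyx, hi⟩ := hx.exists_commute
  have hyZ := hG.notMem_center_of_two_lt_orderOf (hyx ▸ hx.two_lt)
  refine Nat.Coprime.mul_dvd_of_dvd_of_dvd ((Nat.coprime_two_left.2 hx.2.1).pow_left 3) ?_
    (orderOf_dvd_card_centralizer (Commute.refl x))
  rw [hG.isOCGroup.card_centralizer_eq (hG.notMem_center_of_two_lt_orderOf hx.two_lt) hyZ hyx.symm]
  exact hG.eight_dvd_card_centralizer hyZ (hyx ▸ hx.2.1) hyi hi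

theorem dvd_card_centralizer_of_orderOf_eq_nine {x y : G} (h3 : IsQuarticOrder G 3)
    (hx : orderOf x = 3) (hy : orderOf y = 9) : 216 ∣ Nat.card (centralizer {x}) := by
  have hyZ : y ∉ center G := hG.notMem_center_of_two_lt_orderOf (by lia)
  have hy3 : orderOf (y ^ 3) = 3 := orderOf_pow_eq_of_orderOf_eq_mul three_ne_zero hy
  have h27 : 3 * 9 ∣ Nat.card (centralizer {y ^ 3}) :=
    (Nat.mul_dvd_mul_left 3 (hy ▸ orderOf_dvd_card_centralizer (Commute.refl y))).trans
      (hG.isOCGroup.prime_mul_card_centralizer_dvd hyZ Nat.prime_three (hy ▸ dvd_rfl)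
        (isOfFinOrder_of_finite y))
  rw [hG.isOCGroup.card_centralizer_eq (x := y ^ 3) (y := x)
    (hG.notMem_center_of_two_lt_orderOf (by lia)) (hG.notMem_center_of_two_lt_orderOf (by lia))
    (hy3.trans hx.symm)] at h27
  have h8 : 8 * 3 ∣ Nat.card (centralizer {x}) := by
    have := hG.eight_mul_dvd_card_centralizer (hx.symm ▸ h3)
    rwa [hx] at this
  lia

end IsOCWithInvolution

section

variable {G : Type*} [Group G]

/-- The proportion of the noncentral elements of a finite group whose order is `n` times a power
of `2`; for odd `n`, these are the ones whose order has odd part `n`. -/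
noncomputable def oddPartFreq (G : Type*) [Group G] (n : ℕ) : ℚ :=
  freq {g : G | g ∉ center G ∧ ∃ k, orderOf g = 2 ^ k * n}

theorem oddPartFreq_eq_zero [Finite G] {n : ℕ} (h : ∀ x : G, orderOf x ≠ n) :
    oddPartFreq G n = 0 := by
  have hempty : {g : G | g ∉ center G ∧ ∃ k, orderOf g = 2 ^ k * n} = ∅ := by
    refine Set.eq_empty_of_forall_notMem fun g ⟨_, k, hk⟩ ↦ h (g ^ 2 ^ k) ?_
    exact orderOf_pow_eq_of_orderOf_eq_mul (by positivity) hk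
  rw [oddPartFreq, hempty, freq_empty]

end

namespace IsOCWithInvolution

variable {G : Type*} [Group G] [Finite G] {z : G} (hG : IsOCWithInvolution G z)

include hG

theorem two_pow_exponent_le_two {g : G} {k n : ℕ} (hn : 1 < n) (ho : Odd n)
    (hg : orderOf g = 2 ^ k * n) : k ≤ 2 := by
  obtain ⟨u, hu, v, hv, -, huk, hvn⟩ := exists_mul_eq_of_orderOf_eq_mul hg
    (Nat.mul_pos (by positivity) ho.pos) ((Nat.coprime_two_left.2 ho).pow_left k)
  exact hG.le_two_of_commute_of_orderOf_eq_two_pow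
    (hG.notMem_center_of_two_lt_orderOf (hvn ▸ two_lt_of_odd_of_one_lt ho hn)) (hvn ▸ ho)
    (commute_of_mem_zpowers_of_mem_zpowers hv hu) huk

theorem oddPartFreq_le_sum {n : ℕ} (hn : 1 < n) (ho : Odd n) :
    oddPartFreq G n ≤ ∑ k ∈ Finset.range 3, orderFreq G (2 ^ k * n) := by
  refine le_trans (freq_mono fun g ⟨hgZ, k, hk⟩ ↦ ?_) (freq_biUnion_le _ _)
  exact Set.mem_biUnion (Finset.mem_range.2 (Nat.lt_succ_of_le
    (hG.two_pow_exponent_le_two hn ho hk))) ⟨hgZ, hk⟩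

theorem oddPartFreq_le {n c : ℕ} (hn : 1 < n) (ho : Odd n) (hc : 0 < c)
    (h : ∀ x : G, orderOf x = n → c ≤ Nat.card (centralizer {x})) :
    oddPartFreq G n ≤ 2 / c + orderFreq G (4 * n) := by
  have h1 : orderFreq G (2 ^ 0 * n) ≤ 1 / c :=
    hG.isOCGroup.orderFreq_le hc fun x _ hx ↦ h x (hx.trans (one_mul n))
  have h2 : orderFreq G (2 ^ 1 * n) ≤ 1 / c := by
    refine hG.isOCGroup.orderFreq_le hc fun y _ hy ↦ ?_
    rw [pow_one] at hy
    exact (h (y ^ 2) (orderOf_pow_eq_of_orderOf_eq_mul two_ne_zero hy)).trans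
      (hG.card_centralizer_sq_le hn ho hy)
  have hsum := hG.oddPartFreq_le_sum hn ho
  rw [Finset.sum_range_succ, Finset.sum_range_succ, Finset.sum_range_one] at hsum
  have hdiv : (2 : ℚ) / c = 1 / c + 1 / c := by ring
  exact hsum.trans (hdiv ▸ add_le_add (add_le_add h1 h2) le_rfl)

theorem oddPartFreq_le_of_isQuarticOrder {n : ℕ} (hn : IsQuarticOrder G n) :
    oddPartFreq G n ≤ 1 / (2 * n) := by
  have hpos : 0 < n := by have := hn.1; lia
  have h := hG.oddPartFreq_le hn.1 hn.2.1 (c := 8 * n) (by lia) fun x hx ↦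
    Nat.le_of_dvd Nat.card_pos (hx ▸ hG.eight_mul_dvd_card_centralizer (hx.symm ▸ hn))
  have h4 := hG.isOCGroup.orderFreq_le_one_div (n := 4 * n) (by lia)
  have hdiv : (1 : ℚ) / (2 * n) = 2 / (8 * n) + 1 / (4 * n) := by field_simp; norm_num
  push_cast at h h4
  linarith

theorem oddPartFreq_le_one_div {n : ℕ} (hn : 1 < n) (ho : Odd n) : oddPartFreq G n ≤ 1 / n := by
  have hpos : (0 : ℚ) < n := by exact_mod_cast ho.pos
  by_cases hq : IsQuarticOrder G n
  · refine (hG.oddPartFreq_le_of_isQuarticOrder hq).trans (one_div_le_one_div_of_le hpos ?_)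
    linarith
  · have h := hG.oddPartFreq_le hn ho (c := 2 * n) (by lia) fun x hx ↦
      Nat.le_of_dvd Nat.card_pos (hx ▸ hG.two_mul_orderOf_dvd_card_centralizer (hx.symm ▸ ho))
    rw [orderFreq_eq_zero fun x _ hx ↦ hq ⟨hn, ho, x, hx⟩, add_zero] at h
    refine h.trans_eq ?_
    push_cast
    field_simp

theorem oddPartFreq_three_le_of_orderOf_eq_nine {y : G} (h3 : IsQuarticOrder G 3)
    (hy : orderOf y = 9) : oddPartFreq G 3 ≤ 1 / 108 + 1 / 12 := by
  have h := hG.oddPartFreq_le (n := 3) (c := 216) (by norm_num) (by decide) (by norm_num)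
    fun x hx ↦ Nat.le_of_dvd Nat.card_pos (hG.dvd_card_centralizer_of_orderOf_eq_nine h3 hx hy)
  have h12 := hG.isOCGroup.orderFreq_le_one_div (n := 4 * 3) (by norm_num)
  norm_num at h h12 ⊢
  linarith

theorem exists_orderOf_eq_two_pow_mul (g : G) :
    ∃ k n, orderOf g = 2 ^ k * n ∧ (n ∈ ({1, 3, 5, 7, 9, 11} : Finset ℕ) ∨
      ∃ t < Nat.card G, n = Nat.fermatNumber (t + 2)) := by
  obtain ⟨k, n, ho, hg⟩ := Nat.exists_eq_two_pow_mul_odd (orderOf_pos g).ne'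
  have hgk : orderOf (g ^ 2 ^ k) = n := orderOf_pow_eq_of_orderOf_eq_mul (by positivity) hg
  refine ⟨k, n, hg, ?_⟩
  by_cases hg1 : g ^ 2 ^ k = 1
  · rw [hg1, orderOf_one] at hgk
    exact .inl (hgk ▸ by decide)
  obtain ⟨t, ht⟩ | ⟨h7 | h9, -⟩ | ⟨h11, -⟩ := hG.orderOf_cases_of_odd hg1 (hgk ▸ ho)
  · rw [hgk] at ht
    match t with
    | 0 => exact .inl (ht ▸ by decide)
    | 1 => exact .inl (ht ▸ by decide)
    | t + 2 =>
      refine .inr ⟨t, ?_, ht⟩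
      have hle : n ≤ Nat.card G := Nat.le_of_dvd Nat.card_pos (hgk ▸ orderOf_dvd_natCard _)
      have hlt : t + 1 < 16 ^ (t + 1) := Nat.lt_pow_self (by norm_num)
      have hF := sixteen_pow_le_fermatNumber t
      lia
  · exact .inl (by rw [← hgk, h7]; decide)
  · exact .inl (by rw [← hgk, h9]; decide)
  · exact .inl (by rw [← hgk, h11]; decide)

theorem one_le_sum_oddPartFreq :
    1 ≤ 2 / (Nat.card G : ℚ) + ∑ n ∈ {1, 3, 5, 7, 9, 11}, oddPartFreq G n +
      ∑ t ∈ Finset.range (Nat.card G), oddPartFreq G (Nat.fermatNumber (t + 2)) := by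
  let s (n : ℕ) : Set G := {g | g ∉ center G ∧ ∃ k, orderOf g = 2 ^ k * n}
  let A : Set G := center G ∪ ⋃ n ∈ ({1, 3, 5, 7, 9, 11} : Finset ℕ), s n
  have hA : freq A ≤ 2 / (Nat.card G : ℚ) + ∑ n ∈ {1, 3, 5, 7, 9, 11}, oddPartFreq G n := by
    rw [← Nat.cast_two, ← hG.card_center, ← freq_coe_subgroup]
    exact (freq_union_le _ _).trans (add_le_add_right (freq_biUnion_le _ s) _)
  refine (one_le_freq_add_sum_freq (A := A) (Finset.range (Nat.card G))
    (fun t ↦ s (Nat.fermatNumber (t + 2))) fun g hg ↦ ?_).trans (add_le_add_left hA _)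
  have hgZ : g ∉ center G := fun h ↦ hg (.inl h)
  obtain ⟨k, n, hk, hn | ⟨t, ht, rfl⟩⟩ := hG.exists_orderOf_eq_two_pow_mul g
  · exact absurd (.inr (Set.mem_biUnion hn ⟨hgZ, k, hk⟩)) hg
  · exact ⟨t, Finset.mem_range.2 ht, hgZ, k, hk⟩

theorem isQuarticOrder_three {x : G} (hx : orderOf x = 7 ∨ orderOf x = 9) :
    IsQuarticOrder G 3 := by
  have hx1 : x ≠ 1 := by rintro rfl; simp at hx
  have ho : Odd (orderOf x) := by obtain h | h := hx <;> rw [h] <;> decide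
  obtain ⟨t, ht⟩ | ⟨-, h3⟩ | ⟨h11, -⟩ := hG.orderOf_cases_of_odd hx1 ho
  · have := fermatNumber_eq_or_le t
    lia
  · exact h3
  · lia

theorem isQuarticOrder_five {x : G} (hx : orderOf x = 11) : IsQuarticOrder G 5 := by
  have hx1 : x ≠ 1 := by rintro rfl; simp at hx
  obtain ⟨t, ht⟩ | ⟨h79, -⟩ | ⟨-, h5⟩ := hG.orderOf_cases_of_odd hx1 (hx ▸ by decide)
  · have := fermatNumber_eq_or_le t
    lia
  · lia
  · exact h5

theorem oddPartFreq_three_seven_nine_le :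
    oddPartFreq G 3 + oddPartFreq G 7 + oddPartFreq G 9 = 0 ∨
    3 ∣ Nat.card G ∧ oddPartFreq G 3 + oddPartFreq G 7 + oddPartFreq G 9 ≤ 1 / 3 ∨
    216 ≤ Nat.card G ∧
      oddPartFreq G 3 + oddPartFreq G 7 + oddPartFreq G 9 ≤ 131 / 378 := by
  have h7 := hG.oddPartFreq_le_one_div (n := 7) (by norm_num) (by decide)
  have h9 := hG.oddPartFreq_le_one_div (n := 9) (by norm_num) (by decide)
  by_cases hq : IsQuarticOrder G 3
  · obtain ⟨x, -, -, hx, -⟩ := hq.exists_commute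
    have h3 := hG.oddPartFreq_le_of_isQuarticOrder hq
    by_cases hy : ∃ y : G, orderOf y = 9
    · obtain ⟨y, hy⟩ := hy
      have hcard : 216 ∣ Nat.card G := (hG.dvd_card_centralizer_of_orderOf_eq_nine hq hx hy).trans
        (Subgroup.card_subgroup_dvd_card _)
      have h3 := hG.oddPartFreq_three_le_of_orderOf_eq_nine hq hy
      norm_num at h3 h7 h9
      exact .inr (.inr ⟨Nat.le_of_dvd Nat.card_pos hcard, by linarith⟩)
    · rw [oddPartFreq_eq_zero fun y h ↦ hy ⟨y, h⟩]
      norm_num at h3 h7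
      exact .inr (.inl ⟨hx ▸ orderOf_dvd_natCard x, by linarith⟩)
  · have hne {n : ℕ} (hn : n = 7 ∨ n = 9) (x : G) : orderOf x ≠ n := fun hx ↦
      hq (hG.isQuarticOrder_three (hx.symm ▸ hn))
    rw [oddPartFreq_eq_zero (hne (.inl rfl)), oddPartFreq_eq_zero (hne (.inr rfl)), add_zero,
      add_zero]
    by_cases hx : ∃ x : G, orderOf x = 3
    · obtain ⟨x, hx⟩ := hx
      exact .inr (.inl ⟨hx ▸ orderOf_dvd_natCard x,
        hG.oddPartFreq_le_one_div (by norm_num) (by decide)⟩)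
    · exact .inl (oddPartFreq_eq_zero fun x h ↦ hx ⟨x, h⟩)

theorem oddPartFreq_five_eleven_le :
    oddPartFreq G 5 + oddPartFreq G 11 = 0 ∨
      (∃ x : G, orderOf x = 5) ∧ oddPartFreq G 5 + oddPartFreq G 11 ≤ 1 / 5 := by
  by_cases hx : ∃ x : G, orderOf x = 5
  · refine .inr ⟨hx, ?_⟩
    by_cases hq : IsQuarticOrder G 5
    · have h5 := hG.oddPartFreq_le_of_isQuarticOrder hq
      have h11 := hG.oddPartFreq_le_one_div (n := 11) (by norm_num) (by decide)
      norm_num at h5 h11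
      linarith
    · rw [oddPartFreq_eq_zero (n := 11) fun x h ↦ hq (hG.isQuarticOrder_five h), add_zero]
      exact hG.oddPartFreq_le_one_div (by norm_num) (by decide)
  · rw [oddPartFreq_eq_zero fun x h ↦ hx ⟨x, h⟩, oddPartFreq_eq_zero (n := 11) fun x h ↦ ?_,
      add_zero]
    · exact .inl rfl
    · obtain ⟨y, -, -, hy, -⟩ := (hG.isQuarticOrder_five h).exists_commute
      exact hx ⟨y, hy⟩

theorem sum_oddPartFreq_fermatNumber_le (N : ℕ) :
    ∑ t ∈ Finset.range N, oddPartFreq G (Nat.fermatNumber (t + 2)) ≤ 1 / 15 := by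
  have hterm (t : ℕ) : oddPartFreq G (Nat.fermatNumber (t + 2)) ≤ (1 / 16 : ℚ) ^ (t + 1) := by
    have hF := sixteen_pow_le_fermatNumber t
    refine (hG.oddPartFreq_le_one_div (by have := Nat.two_lt_fermatNumber (t + 2); lia)
      (Nat.odd_fermatNumber _)).trans ?_
    rw [one_div_pow]
    exact one_div_le_one_div_of_le (by positivity) (mod_cast hF)
  calc ∑ t ∈ Finset.range N, oddPartFreq G (Nat.fermatNumber (t + 2))
    _ ≤ ∑ t ∈ Finset.range N, (1 / 16 : ℚ) ^ (t + 1) := Finset.sum_le_sum fun t _ ↦ hterm t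
    _ = ∑ i ∈ Finset.Ico 1 (N + 1), (1 / 16 : ℚ) ^ i := by
      rw [Finset.range_eq_Ico, Finset.sum_Ico_add' (fun i ↦ (1 / 16 : ℚ) ^ i)]
    _ ≤ (1 / 16) ^ 1 / (1 - 1 / 16) := geom_sum_Ico_le_of_lt_one (by norm_num) (by norm_num)
    _ = 1 / 15 := by norm_num

end IsOCWithInvolution

theorem exists_forall_orderOf_eq_prime_pow_le (G : Type*) [Group G] [Finite G] {p : ℕ}
    (hp : p.Prime) :
    ∃ (m : ℕ) (u : G), orderOf u = p ^ m ∧ ∀ (v : G) (k : ℕ), orderOf v = p ^ k → k ≤ m := by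
  obtain ⟨u, hu⟩ := hp.exists_orderOf_eq_pow_factorization_exponent G
  refine ⟨_, u, hu, fun v k hv ↦ ?_⟩
  rw [← hp.pow_dvd_iff_le_factorization Monoid.exponent_ne_zero_of_finite, ← hv]
  exact Monoid.order_dvd_exponent v

namespace IsOCGroup

variable {G : Type*} [Group G] [Finite G] (hG : IsOCGroup G)

include hG

theorem orderFreq_orderOf_pow_le {y : G} {p : ℕ} (hp : p.Prime) (hpy : p ^ 2 ∣ orderOf y)
    (hy : y ^ p ∉ center G) : orderFreq G (orderOf (y ^ p)) ≤ orderFreq G (orderOf y) / p := by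
  have hyZ : y ∉ center G := fun h ↦ hy (pow_mem h p)
  have hle := Nat.le_of_dvd Nat.card_pos
    (hG.prime_mul_card_centralizer_dvd hyZ hp hpy (isOfFinOrder_of_finite y))
  have hpos : 0 < p * Nat.card (centralizer {y}) := Nat.mul_pos hp.pos Nat.card_pos
  rw [hG.orderFreq_orderOf hy, hG.orderFreq_orderOf hyZ, div_div, mul_comm]
  exact one_div_le_one_div_of_le (mod_cast hpos) (mod_cast hle)

theorem sum_orderFreq_two_pow_le {k : ℕ} (hk : 0 < k) (d : ℕ) {u : G}
    (hu : orderOf u = 2 ^ (k + d)) (huZ : u ^ 2 ^ d ∉ center G) :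
    ∑ i ∈ Finset.Ico k (k + d + 1), orderFreq G (2 ^ i) ≤
      (2 - 1 / 2 ^ d) * orderFreq G (2 ^ (k + d)) := by
  induction d generalizing u with
  | zero => norm_num
  | succ d ih =>
    have hu2 : orderOf (u ^ 2) = 2 ^ (k + d) :=
      orderOf_pow_eq_of_orderOf_eq_mul two_ne_zero (hu.trans (pow_succ' 2 (k + d)))
    have hu2d : (u ^ 2) ^ 2 ^ d ∉ center G := by rwa [← pow_mul, ← pow_succ']
    have hhalf : orderFreq G (2 ^ (k + d)) ≤ orderFreq G (2 ^ (k + d + 1)) / 2 := by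
      rw [add_assoc, ← hu2, ← hu]
      exact hG.orderFreq_orderOf_pow_le Nat.prime_two (hu ▸ pow_dvd_pow 2 (by lia))
        fun h ↦ hu2d (pow_mem h _)
    rw [← add_assoc, Finset.sum_Ico_succ_top (by lia)]
    calc (∑ i ∈ Finset.Ico k (k + d + 1), orderFreq G (2 ^ i)) + orderFreq G (2 ^ (k + d + 1))
      _ ≤ (2 - 1 / 2 ^ d) * (orderFreq G (2 ^ (k + d + 1)) / 2) +
          orderFreq G (2 ^ (k + d + 1)) :=
        add_le_add ((ih hu2 hu2d).trans (mul_le_mul_of_nonneg_left hhalf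
          (two_sub_one_div_two_pow_nonneg d))) le_rfl
      _ = (2 - 1 / 2 ^ (d + 1)) * orderFreq G (2 ^ (k + d + 1)) := by rw [pow_succ]; ring

end IsOCGroup

theorem oddPartFreq_one_le_sum {G : Type*} [Group G] [Finite G] {m : ℕ}
    (hmax : ∀ (v : G) (k : ℕ), orderOf v = 2 ^ k → k ≤ m) :
    oddPartFreq G 1 ≤ ∑ i ∈ Finset.Ico 1 (m + 1), orderFreq G (2 ^ i) := by
  refine le_trans (freq_mono fun g ⟨hgZ, k, hk⟩ ↦ ?_) (freq_biUnion_le _ _)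
  rw [mul_one] at hk
  have hk0 : k ≠ 0 := fun h ↦ hgZ <| by
    rw [h, pow_zero, orderOf_eq_one_iff] at hk
    exact hk ▸ one_mem _
  exact Set.mem_biUnion (Finset.mem_Ico.2 ⟨Nat.pos_of_ne_zero hk0, Nat.lt_succ_of_le (hmax g k hk)⟩)
    ⟨hgZ, hk⟩

namespace IsOCWithInvolution

variable {G : Type*} [Group G] [Finite G] {z : G} (hG : IsOCWithInvolution G z)

include hG

theorem orderFreq_two_le : orderFreq G 2 ≤ 1 / 4 := by
  refine hG.isOCGroup.orderFreq_le (c := 4) (by norm_num) fun x hx _ ↦ ?_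
  have := two_mul_card_center_le hx
  rwa [hG.card_center] at this

theorem oddPartFreq_one_le_of_two_le {m : ℕ} {u : G} (hm : 2 ≤ m) (hu : orderOf u = 2 ^ m)
    (hmax : ∀ (v : G) (k : ℕ), orderOf v = 2 ^ k → k ≤ m) :
    oddPartFreq G 1 ≤ 1 / 4 + (2 - 1 / 2 ^ (m - 2)) / 2 ^ m := by
  obtain ⟨d, rfl⟩ := Nat.exists_eq_add_of_le hm
  have hud : orderOf (u ^ 2 ^ d) = 4 :=
    orderOf_pow_eq_of_orderOf_eq_mul (by positivity)
      (hu.trans ((pow_add 2 2 d).trans (mul_comm _ _)))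
  have hsum := hG.isOCGroup.sum_orderFreq_two_pow_le two_pos d hu
    (hG.notMem_center_of_two_lt_orderOf (by lia))
  have hle : orderFreq G (2 ^ (2 + d)) ≤ 1 / 2 ^ (2 + d) :=
    mod_cast hG.isOCGroup.orderFreq_le_one_div (n := 2 ^ (2 + d)) (by positivity)
  have htotal := oddPartFreq_one_le_sum hmax
  rw [Finset.sum_eq_sum_Ico_succ_bot (by lia), pow_one] at htotal
  rw [Nat.add_sub_cancel_left, div_eq_mul_one_div _ ((2 : ℚ) ^ (2 + d))]
  exact htotal.trans (add_le_add hG.orderFreq_two_le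
    (hsum.trans (mul_le_mul_of_nonneg_left hle (two_sub_one_div_two_pow_nonneg d))))

theorem orderFreq_two_pow_le_of_pow_ne {d : ℕ} {u : G} (hu : orderOf u = 2 ^ (d + 1))
    (hne : u ^ 2 ^ d ≠ z) (huZ : u ∉ center G) :
    orderFreq G (2 ^ (d + 1)) ≤ 1 / (2 * 2 ^ (d + 1)) := by
  have hzu : z ∉ zpowers u := fun h ↦ hne
    (pow_eq_of_mem_zpowers_of_orderOf_eq_two (hu.trans (pow_succ' 2 d)) h hG.orderOf_eq_two)
  have hcard : 2 * 2 ^ (d + 1) ≤ Nat.card (centralizer {u}) := by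
    rw [← hu, ← Nat.card_zpowers]
    exact two_mul_card_le_of_lt (SetLike.lt_iff_le_and_exists.2
      ⟨zpowers_le.2 (self_mem_centralizer u), z, center_le_centralizer _ hG.mem_center, hzu⟩)
  rw [← hu, hG.isOCGroup.orderFreq_orderOf huZ]
  exact one_div_le_one_div_of_le (by positivity) (mod_cast hcard)

theorem oddPartFreq_one_le_one_fourth {m : ℕ} {u : G} (hu : orderOf u = 2 ^ m)
    (hmax : ∀ (v : G) (k : ℕ), orderOf v = 2 ^ k → k ≤ m)
    (hsq : ∀ w : G, orderOf w = 4 → w ^ 2 ≠ z) : oddPartFreq G 1 ≤ 1 / 4 := by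
  have htotal := oddPartFreq_one_le_sum hmax
  match m with
  | 0 => exact htotal.trans (by simp)
  | 1 => exact htotal.trans (by simpa using hG.orderFreq_two_le)
  | d + 2 =>
    have hw : orderOf (u ^ 2 ^ d) = 4 :=
      orderOf_pow_eq_of_orderOf_eq_mul (by positivity) (hu.trans (pow_add 2 d 2))
    have hinv : orderOf (u ^ 2 ^ (d + 1)) = 2 :=
      orderOf_pow_eq_of_orderOf_eq_mul (by positivity) (hu.trans (pow_succ 2 (d + 1)))
    have hne : u ^ 2 ^ (d + 1) ≠ z := by
      rw [pow_succ, pow_mul]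
      exact hsq _ hw
    have hinvZ : u ^ 2 ^ (d + 1) ∉ center G := fun h ↦
      ((hG.mem_center_iff _).1 h).elim (by rw [← orderOf_eq_one_iff]; lia) hne
    have hle := hG.orderFreq_two_pow_le_of_pow_ne hu hne fun h ↦ hinvZ (pow_mem h _)
    have hsum := hG.isOCGroup.sum_orderFreq_two_pow_le one_pos (d + 1)
      (by rw [add_comm 1]; exact hu) hinvZ
    rw [add_comm 1] at hsum
    calc oddPartFreq G 1
      _ ≤ (2 - 1 / 2 ^ (d + 1)) * orderFreq G (2 ^ (d + 2)) := htotal.trans hsum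
      _ ≤ (2 - 1 / 2 ^ (d + 1)) * (1 / (2 * 2 ^ (d + 2))) :=
        mul_le_mul_of_nonneg_left hle (two_sub_one_div_two_pow_nonneg (d + 1))
      _ = 1 / 4 - (1 - 1 / 2 ^ (d + 1)) ^ 2 / 4 := by rw [pow_succ 2 (d + 1)]; field
      _ ≤ 1 / 4 := sub_le_self _ (by positivity)

omit [Finite G] in
theorem sq_eq_of_orderOf_eq_four {v w : G} (hv : orderOf v = 4) (hvz : v ^ 2 = z)
    (hw : orderOf w = 4) : w ^ 2 = z := by
  obtain ⟨g, hg⟩ := hG.isOCGroup.exists_semiconjBy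
    (hG.notMem_center_of_two_lt_orderOf (x := v) (by lia))
    (hG.notMem_center_of_two_lt_orderOf (x := w) (by lia)) (hv.trans hw.symm)
  have h2 : g * z = w ^ 2 * g := hvz ▸ (hg.pow_right 2).eq
  rw [(commute_of_mem_center hG.mem_center g).eq] at h2
  exact (mul_right_cancel h2).symm

omit [Finite G] in
theorem pow_two_pow_mem_center (hsq : ∀ w : G, orderOf w = 4 → w ^ 2 = z) {u : G} {s j : ℕ}
    (hu : orderOf u = 2 ^ s) (hs : s ≤ j + 2) : u ^ 2 ^ (j + 1) ∈ center G := by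
  obtain hs | rfl := Nat.le_succ_iff.1 hs
  · rw [orderOf_dvd_iff_pow_eq_one.1 (hu ▸ pow_dvd_pow 2 hs)]
    exact one_mem _
  · have h4 : orderOf (u ^ 2 ^ j) = 4 :=
      orderOf_pow_eq_of_orderOf_eq_mul (by positivity) (hu.trans (pow_add 2 j 2))
    rw [pow_succ, pow_mul, hsq _ h4]
    exact hG.mem_center

theorem exists_orderOf_eq_two_pow_of_pow_eq_neg_one (hsq : ∀ w : G, orderOf w = 4 → w ^ 2 = z)
    {x : G} (hx : 2 < orderOf x) {j k : ℕ} (hk : (k : ZMod (orderOf x)) ^ 2 ^ (j + 1) = -1) :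
    ∃ (u : G) (s : ℕ), orderOf u = 2 ^ s ∧ j + 3 ≤ s := by
  have : Fact (2 < orderOf x) := ⟨hx⟩
  have hunit : IsUnit (k : ZMod (orderOf x)) :=
    (isUnit_pow_iff (by positivity)).1 (hk ▸ isUnit_one.neg)
  obtain ⟨g, hg⟩ := hG.isOCGroup.exists_semiconjBy_pow (hG.notMem_center_of_two_lt_orderOf hx)
    ((ZMod.isUnit_iff_coprime _ _).1 hunit).symm
  obtain ⟨s, r, hr, hsr⟩ := Nat.exists_eq_two_pow_mul_odd (orderOf_pos g).ne'
  have hu : orderOf (g ^ r) = 2 ^ s :=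
    orderOf_pow_eq_of_orderOf_eq_mul hr.pos.ne' (hsr.trans (mul_comm _ _))
  refine ⟨g ^ r, s, hu, ?_⟩
  by_contra! hs
  have hcomm : Commute (g ^ (r * 2 ^ (j + 1))) x := by
    rw [pow_mul]
    exact (commute_of_mem_center (hG.pow_two_pow_mem_center hsq hu (by lia)) x).symm
  rw [commute_pow_iff_orderOf_dvd hg,
    orderOf_eq_two_pow_of_pow_eq_neg_one (ZMod.neg_one_ne_one) hk] at hcomm
  have hdvd := (hr.coprime_two_left.pow_left _).dvd_of_dvd_mul_left hcomm
  exact absurd ((Nat.pow_dvd_pow_iff_le_right one_lt_two).1 hdvd) (by lia)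

theorem add_three_le_of_orderOf_eq_fermatNumber (hsq : ∀ w : G, orderOf w = 4 → w ^ 2 = z)
    {m : ℕ} (hmax : ∀ (v : G) (k : ℕ), orderOf v = 2 ^ k → k ≤ m) {x : G} {t j : ℕ}
    (hx : orderOf x = Nat.fermatNumber t) (hj : j + 1 ≤ t) : j + 3 ≤ m := by
  obtain ⟨u, s, hu, hs⟩ := hG.exists_orderOf_eq_two_pow_of_pow_eq_neg_one hsq
    (hx ▸ Nat.two_lt_fermatNumber t) (hx ▸ natCast_two_pow_pow_eq_neg_one hj)
  exact hs.trans (hmax u s hu)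

theorem eight_dvd_card {w : G} (hw : orderOf w = 4) (hwz : w ^ 2 = z) : 8 ∣ Nat.card G := by
  obtain ⟨g, hg⟩ := hG.isOCGroup.exists_semiconjBy_inv
    (hG.notMem_center_of_two_lt_orderOf (x := w) (by lia))
  obtain ⟨h, -, ⟨s, hs⟩, hinv⟩ := exists_orderOf_eq_two_pow_semiconjBy (isOfFinOrder_of_finite g)
    hg (by simpa only [inv_inv] using hg.inv_right)
  have hpow (hs3 : s < 3) : h ^ 2 ∈ zpowers w := by
    obtain rfl | hs2 : s = 2 ∨ s ≤ 1 := by lia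
    · rw [hG.sq_eq_of_orderOf_eq_four hw hwz hs, ← hwz]
      exact npow_mem_zpowers w 2
    · have hdvd : orderOf h ∣ 2 := hs ▸ pow_dvd_pow 2 hs2
      rw [orderOf_dvd_iff_pow_eq_one.1 hdvd]
      exact one_mem _
  obtain hs3 | hs3 := lt_or_ge s 3
  · simpa using eight_dvd_card_of_semiconjBy_inv hw (mem_top w) (mem_top h) hinv (hpow hs3)
  · exact (hs ▸ pow_dvd_pow 2 hs3 : 2 ^ 3 ∣ orderOf h).trans (orderOf_dvd_natCard h)

theorem two_div_card_add_oddPartFreq_three_seven_nine_le (h8 : 8 ∣ Nat.card G) :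
    2 / (Nat.card G : ℚ) + (oddPartFreq G 3 + oddPartFreq G 7 + oddPartFreq G 9) ≤ 5 / 12 := by
  obtain h | ⟨h3, h⟩ | ⟨h216, h⟩ := hG.oddPartFreq_three_seven_nine_le
  · have hcard : 2 / (Nat.card G : ℚ) ≤ 2 / 8 :=
      mod_cast two_div_natCast_le (by norm_num) (Nat.le_of_dvd Nat.card_pos h8)
    linarith
  · have h24 : 8 * 3 ∣ Nat.card G := Nat.Coprime.mul_dvd_of_dvd_of_dvd (by norm_num) h8 h3
    have hcard : 2 / (Nat.card G : ℚ) ≤ 2 / 24 :=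
      mod_cast two_div_natCast_le (by norm_num) (Nat.le_of_dvd Nat.card_pos h24)
    linarith
  · have hcard : 2 / (Nat.card G : ℚ) ≤ 2 / 216 := mod_cast two_div_natCast_le (by norm_num) h216
    linarith

-- The bound is `1 - 3 / 8 - 1 / 15`, what `2`-elements and large Fermat numbers leave.
theorem two_div_card_add_oddPartFreq_three_to_eleven_lt (h8 : 8 ∣ Nat.card G) :
    2 / (Nat.card G : ℚ) + (oddPartFreq G 3 + oddPartFreq G 7 + oddPartFreq G 9) +
      (oddPartFreq G 5 + oddPartFreq G 11) < 67 / 120 := by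
  obtain h5 | ⟨⟨x, hx⟩, h5⟩ := hG.oddPartFreq_five_eleven_le
  · linarith [hG.two_div_card_add_oddPartFreq_three_seven_nine_le h8]
  have h40 : 8 * 5 ∣ Nat.card G := Nat.Coprime.mul_dvd_of_dvd_of_dvd (by norm_num) h8
    (hx ▸ orderOf_dvd_natCard x)
  obtain h | ⟨h3, h⟩ | ⟨h216, h⟩ := hG.oddPartFreq_three_seven_nine_le
  · have hcard : 2 / (Nat.card G : ℚ) ≤ 2 / 40 :=
      mod_cast two_div_natCast_le (by norm_num) (Nat.le_of_dvd Nat.card_pos h40)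
    linarith
  · have h120 : 8 * 5 * 3 ∣ Nat.card G :=
      Nat.Coprime.mul_dvd_of_dvd_of_dvd (by norm_num) h40 h3
    have hcard : 2 / (Nat.card G : ℚ) ≤ 2 / 120 :=
      mod_cast two_div_natCast_le (by norm_num) (Nat.le_of_dvd Nat.card_pos h120)
    linarith
  · have hcard : 2 / (Nat.card G : ℚ) ≤ 2 / 216 := mod_cast two_div_natCast_le (by norm_num) h216
    linarith

theorem one_le_two_div_card_add_sum_oddPartFreq :
    1 ≤ oddPartFreq G 1 +
      (2 / (Nat.card G : ℚ) + (oddPartFreq G 3 + oddPartFreq G 7 + oddPartFreq G 9) +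
        (oddPartFreq G 5 + oddPartFreq G 11)) +
      ∑ t ∈ Finset.range (Nat.card G), oddPartFreq G (Nat.fermatNumber (t + 2)) := by
  refine hG.one_le_sum_oddPartFreq.trans_eq ?_
  rw [Finset.sum_insert (by decide), Finset.sum_insert (by decide), Finset.sum_insert (by decide),
    Finset.sum_insert (by decide), Finset.sum_insert (by decide), Finset.sum_singleton]
  ring

theorem two_div_card_add_oddPartFreq_five_eleven_le {x : G} (hx : x ∉ center G) :
    2 / (Nat.card G : ℚ) + (oddPartFreq G 5 + oddPartFreq G 11) ≤ 3 / 10 := by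
  obtain h5 | ⟨⟨y, hy⟩, h5⟩ := hG.oddPartFreq_five_eleven_le
  · have h8 : 4 * 2 ≤ Nat.card G := hG.card_center ▸ four_mul_card_center_le hx
    have hcard : 2 / (Nat.card G : ℚ) ≤ 2 / 8 := mod_cast two_div_natCast_le (by norm_num) h8
    linarith
  · have hyZ : y ∉ center G := hG.notMem_center_of_two_lt_orderOf (by lia)
    have hC := Nat.le_of_dvd Nat.card_pos
      (hG.two_mul_orderOf_dvd_card_centralizer (x := y) (hy ▸ by decide))
    have h20 : 20 ≤ Nat.card G := by
      have := two_mul_card_centralizer_le hyZ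
      lia
    have hcard : 2 / (Nat.card G : ℚ) ≤ 2 / 20 := mod_cast two_div_natCast_le (by norm_num) h20
    linarith

theorem exists_orderOf_eq_four_sq_eq {x : G} (hx : x ∉ center G) :
    ∃ w : G, orderOf w = 4 ∧ w ^ 2 = z := by
  by_contra! hsq
  obtain ⟨m, u, hu, hmax⟩ := exists_forall_orderOf_eq_prime_pow_le G Nat.prime_two
  have h1 := hG.oddPartFreq_one_le_one_fourth hu hmax hsq
  have h3 : oddPartFreq G 3 + oddPartFreq G 7 + oddPartFreq G 9 ≤ 131 / 378 := by
    obtain h | ⟨-, h⟩ | ⟨-, h⟩ := hG.oddPartFreq_three_seven_nine_le <;> linarith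
  linarith [hG.one_le_two_div_card_add_sum_oddPartFreq,
    hG.two_div_card_add_oddPartFreq_five_eleven_le hx,
    hG.sum_oddPartFreq_fermatNumber_le (Nat.card G)]

theorem center_eq_top : center G = ⊤ := by
  by_contra htop
  obtain ⟨x, -, hx⟩ := SetLike.exists_of_lt (lt_top_iff_ne_top.2 htop)
  obtain ⟨w, hw, hwz⟩ := hG.exists_orderOf_eq_four_sq_eq hx
  have hsq (v : G) (hv : orderOf v = 4) : v ^ 2 = z := hG.sq_eq_of_orderOf_eq_four hw hwz hv
  have h8 := hG.eight_dvd_card hw hwz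
  obtain ⟨m, u, hu, hmax⟩ := exists_forall_orderOf_eq_prime_pow_le G Nat.prime_two
  have h2m : 2 ≤ m := hmax w 2 hw
  have hT := hG.oddPartFreq_one_le_of_two_le h2m hu hmax
  have hsum := hG.one_le_two_div_card_add_sum_oddPartFreq
  have htail (hm : m < 4) :
      ∑ t ∈ Finset.range (Nat.card G), oddPartFreq G (Nat.fermatNumber (t + 2)) = 0 :=
    Finset.sum_eq_zero fun t _ ↦ oddPartFreq_eq_zero fun y hy ↦ hm.not_ge
      (hG.add_three_le_of_orderOf_eq_fermatNumber hsq hmax (j := 1) hy (by lia))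
  obtain rfl | rfl | hm : m = 2 ∨ m = 3 ∨ 4 ≤ m := by lia
  · have h5 : oddPartFreq G 5 + oddPartFreq G 11 = 0 :=
      hG.oddPartFreq_five_eleven_le.resolve_right fun ⟨⟨y, hy⟩, _⟩ ↦ absurd
        (hG.add_three_le_of_orderOf_eq_fermatNumber hsq hmax (t := 1) (j := 0) hy le_rfl)
        (by norm_num)
    have h3 := hG.two_div_card_add_oddPartFreq_three_seven_nine_le h8
    norm_num at hT
    linarith [htail (by norm_num)]
  · have h35 := hG.two_div_card_add_oddPartFreq_three_to_eleven_lt h8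
    norm_num at hT
    linarith [htail (by norm_num)]
  · have h35 := hG.two_div_card_add_oddPartFreq_three_to_eleven_lt h8
    have hT' : (2 - 1 / 2 ^ (m - 2)) / 2 ^ m ≤ (2 / 2 ^ 4 : ℚ) := by
      gcongr
      · exact sub_le_self _ (by positivity)
      · norm_num
    linarith [hG.sum_oddPartFreq_fermatNumber_le (Nat.card G)]

end IsOCWithInvolution

theorem no_nontrivial_oc_group_general {G : Type*} [Group G] [Finite G] (hG : IsOCGroup G) :
    center G = ⊥ ∨ center G = ⊤ := by
  by_contra! ⟨hbot, htop⟩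
  obtain ⟨x, -, hx⟩ := SetLike.exists_of_lt (lt_top_iff_ne_top.2 htop)
  by_cases hodd : ∃ y ∉ center G, Odd (orderOf y)
  · obtain ⟨y, hy, ho⟩ := hodd
    obtain ⟨z, hz⟩ := hG.exists_isOCWithInvolution hbot hy ho
    exact htop hz.center_eq_top
  · push Not at hodd
    have h2 : IsPGroup 2 G := hG.isPGroup_two_of_odd_mem_center hx fun y ho ↦ by
      by_contra hy
      exact hodd y hy ho
    exact (hG.center_eq_bot_or_eq_top_of_isPGroup h2).elim hbot htop

/-- There is no non-trivial OC-group: if `G` is a finite group in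
which any two elements of the same order outside the center are conjugate, then the
center is trivial or all of `G`. -/
theorem no_nontrivial_oc_group (G : Type) [Group G] [Finite G]
    (hOC : ∀ x y : G, x ∉ Subgroup.center G → y ∉ Subgroup.center G →
      orderOf x = orderOf y → IsConj x y) :
    Subgroup.center G = ⊥ ∨ Subgroup.center G = ⊤ :=
  no_nontrivial_oc_group_general hOC
end

section
/- If G is a non-trivial OC-group, then G is not nilpotent. -/
/-!
A finite nilpotent group is the product of its Sylow subgroups, and direct factors inherit the
property that noncentral elements of equal order are conjugate, so it suffices to show that a
finite `p`-group `G` with this property is abelian.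

If it is not, then `|Z(G)| ≤ |G| / 4`. The noncentral elements of a given order `pⁱ` lie in a single
conjugacy class, of size `|G| / |C(x)|`. Here `C(x)` contains `⟨x⟩` and strictly contains the
nontrivial group `Z(G)`, so `|C(x)| ≥ max(2ⁱ, 4)`. Summing over `i ≥ 1`, the noncentral elements
number less than `(1/4 + 1/4 + 1/8 + 1/16 + ⋯) |G| = (3/4) |G|`, which is too few.
-/

open Subgroup

section ClassSizes

variable {G : Type*} [Group G]

lemma ncard_carrier_mk_eq_index_centralizer (x : G) :
    (ConjClasses.mk x).carrier.ncard = (centralizer {x}).index := by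
  rw [← ConjAct.orbit_eq_carrier_conjClasses, ← MulAction.index_stabilizer,
    centralizer_eq_comap_stabilizer]
  exact (index_comap_of_surjective _ ConjAct.toConjAct.surjective).symm

lemma center_lt_centralizer_singleton {x : G} (hx : x ∉ center G) :
    center G < centralizer {x} :=
  SetLike.lt_iff_le_and_exists.2
    ⟨center_le_centralizer _, x, mem_centralizer_singleton_iff.2 rfl, hx⟩

lemma centralizer_singleton_lt_top {x : G} (hx : x ∉ center G) : centralizer {x} < ⊤ :=
  lt_top_iff_ne_top.2 fun h ↦ hx (centralizer_eq_top_iff_subset.1 h rfl)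

lemma two_mul_card_le_card_of_lt {H K : Subgroup G} [Finite K] (h : H < K) :
    2 * Nat.card H ≤ Nat.card K := by
  obtain ⟨c, hc⟩ := card_dvd_of_le h.le
  have hlt : Nat.card H < Nat.card K :=
    (card_le_of_le h.le).lt_of_not_ge fun hge ↦ h.ne (eq_of_le_of_card_ge h.le hge)
  have hc_two : 2 ≤ c := by
    by_contra! hc_lt
    interval_cases c <;> omega
  calc 2 * Nat.card H ≤ c * Nat.card H := Nat.mul_le_mul_right _ hc_two
    _ = Nat.card K := by rw [hc, mul_comm]

lemma four_mul_card_center_le_card [Finite G] (h : center G ≠ ⊤) :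
    4 * Nat.card (center G) ≤ Nat.card G := by
  obtain ⟨x, -, hx⟩ := SetLike.exists_of_lt (lt_top_iff_ne_top.2 h)
  have h_center := two_mul_card_le_card_of_lt (center_lt_centralizer_singleton hx)
  have h_centralizer := two_mul_card_le_card_of_lt (centralizer_singleton_lt_top hx)
  rw [card_top] at h_centralizer
  omega

lemma orderOf_le_card_centralizer [Finite G] (x : G) :
    orderOf x ≤ Nat.card (centralizer {x}) := by
  rw [← Nat.card_zpowers]
  exact card_le_of_le (zpowers_le.2 (mem_centralizer_singleton_iff.2 rfl))

lemma two_pow_max_le_card_centralizer_of_isPGroup [Finite G] {p : ℕ} [Fact p.Prime]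
    (hG : IsPGroup p G) {x : G} (hx : x ∉ center G) {i : ℕ} (hi : orderOf x = p ^ i) :
    2 ^ max i 2 ≤ Nat.card (centralizer {x}) := by
  have h_order : 2 ^ i ≤ Nat.card (centralizer {x}) :=
    calc 2 ^ i ≤ p ^ i := Nat.pow_le_pow_left (Fact.out : p.Prime).two_le i
      _ = orderOf x := hi.symm
      _ ≤ Nat.card (centralizer {x}) := orderOf_le_card_centralizer x
  have h_four : 2 ^ 2 ≤ Nat.card (centralizer {x}) := by
    have : Nontrivial G := ⟨x, 1, fun h ↦ hx (h ▸ one_mem _)⟩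
    have : Nontrivial (center G) := hG.center_nontrivial
    have h_center : 1 < Nat.card (center G) := Finite.one_lt_card
    have h_double := two_mul_card_le_card_of_lt (center_lt_centralizer_singleton hx)
    omega
  rcases max_choice i 2 with h | h <;> rwa [h]

end ClassSizes

/-- The set of noncentral elements of `G` of order `d`; in an OC-group all of them are conjugate. -/
def noncentralOfOrder (G : Type*) [Group G] (d : ℕ) : Set G :=
  {x | x ∉ center G ∧ orderOf x = d}

lemma sum_half_pow_max_two (n : ℕ) :
    ∑ i ∈ Finset.range (n + 1), (1 / 2 : ℚ) ^ max (i + 1) 2 = 3 / 4 - (1 / 2) ^ (n + 1) := by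
  induction n with
  | zero => norm_num
  | succ n ih =>
    rw [Finset.sum_range_succ, ih, max_eq_left (by omega)]
    ring

lemma exists_compl_center_subset_iUnion_of_isPGroup {G : Type*} [Group G] [Finite G]
    {p : ℕ} [Fact p.Prime] (hG : IsPGroup p G) :
    ∃ n, (center G : Set G)ᶜ ⊆ ⋃ i ∈ Finset.range (n + 1), noncentralOfOrder G (p ^ (i + 1)) := by
  obtain ⟨n, hn⟩ := isPGroup_iff_exists_orderOf_dvd_pow.1 hG
  refine ⟨n, fun x hx ↦ ?_⟩
  obtain ⟨i, hi, hxi⟩ := (Nat.dvd_prime_pow Fact.out).1 (hn x)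
  cases i with
  | zero =>
    rw [pow_zero, orderOf_eq_one_iff] at hxi
    exact absurd (hxi ▸ one_mem _) hx
  | succ i => exact Set.mem_biUnion (Finset.mem_coe.2 (Finset.mem_range.2 (by omega))) ⟨hx, hxi⟩

namespace IsOCGroup

variable {G H : Type*} [Group G] [Group H]

lemma of_leftInverse (hG : IsOCGroup G) (f : H →* G) (r : G →* H)
    (hrf : Function.LeftInverse r f) : IsOCGroup H := by
  have map_notMem_center {x : H} (hx : x ∉ center H) : f x ∉ center G := fun hfx ↦
    hx <| mem_center_iff.2 fun h ↦ by
      simpa only [map_mul, hrf _] using congrArg r (mem_center_iff.1 hfx (f h))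
  intro x y hx hy hxy
  have hconj : IsConj (f x) (f y) :=
    hG _ _ (map_notMem_center hx) (map_notMem_center hy)
      (by rwa [orderOf_injective f hrf.injective, orderOf_injective f hrf.injective])
  simpa only [hrf _] using r.map_isConj hconj

lemma of_mulEquiv (hG : IsOCGroup G) (e : H ≃* G) : IsOCGroup H :=
  hG.of_leftInverse e.toMonoidHom e.symm.toMonoidHom e.symm_apply_apply

lemma of_pi {ι : Type*} {K : ι → Type*} [∀ i, Group (K i)] (hK : IsOCGroup (∀ i, K i)) (i : ι) :
    IsOCGroup (K i) := by
  classical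
  exact hK.of_leftInverse (MonoidHom.mulSingle K i) (Pi.evalMonoidHom K i)
    (Pi.mulSingle_eq_same i)

lemma noncentralOfOrder_subset_carrier (hG : IsOCGroup G) {x : G} (hx : x ∉ center G) :
    noncentralOfOrder G (orderOf x) ⊆ (ConjClasses.mk x).carrier :=
  fun y ⟨hy, hyx⟩ ↦ ConjClasses.mem_carrier_iff_mk_eq.2
    (ConjClasses.mk_eq_mk_iff_isConj.2 (hG y x hy hx hyx))

lemma ncard_noncentralOfOrder_mul_le [Finite G] (hG : IsOCGroup G) {d b : ℕ}
    (hb : ∀ x ∈ noncentralOfOrder G d, b ≤ Nat.card (centralizer {x})) :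
    (noncentralOfOrder G d).ncard * b ≤ Nat.card G := by
  obtain h_empty | ⟨x, hx⟩ := (noncentralOfOrder G d).eq_empty_or_nonempty
  · simp only [h_empty, Set.ncard_empty, zero_mul, zero_le]
  · calc (noncentralOfOrder G d).ncard * b
        ≤ (ConjClasses.mk x).carrier.ncard * Nat.card (centralizer {x}) :=
          Nat.mul_le_mul (Set.ncard_le_ncard (hx.2 ▸ hG.noncentralOfOrder_subset_carrier hx.1))
            (hb x hx)
      _ = Nat.card G := by rw [ncard_carrier_mk_eq_index_centralizer, index_mul_card]

lemma four_mul_ncard_compl_center_lt [Finite G] {p : ℕ} [Fact p.Prime] (hG : IsOCGroup G)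
    (hp : IsPGroup p G) : 4 * (center G : Set G)ᶜ.ncard < 3 * Nat.card G := by
  obtain ⟨n, hn⟩ := exists_compl_center_subset_iUnion_of_isPGroup hp
  have h_class (i : ℕ) : ((noncentralOfOrder G (p ^ (i + 1))).ncard : ℚ) ≤
      (1 / 2) ^ max (i + 1) 2 * Nat.card G := by
    have h_mul := hG.ncard_noncentralOfOrder_mul_le
      fun x (hx : x ∈ noncentralOfOrder G (p ^ (i + 1))) ↦
        two_pow_max_le_card_centralizer_of_isPGroup hp hx.1 hx.2
    rw [one_div_pow, one_div_mul_eq_div, le_div_iff₀ (by positivity)]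
    exact_mod_cast h_mul
  have h_pos : (0 : ℚ) < Nat.card G := Nat.cast_pos.2 Nat.card_pos
  have h_lt : ((center G : Set G)ᶜ.ncard : ℚ) < 3 / 4 * Nat.card G :=
    calc ((center G : Set G)ᶜ.ncard : ℚ)
        ≤ ∑ i ∈ Finset.range (n + 1), ((noncentralOfOrder G (p ^ (i + 1))).ncard : ℚ) := by
          exact_mod_cast (Set.ncard_le_ncard hn).trans (Finset.set_ncard_biUnion_le _ _)
      _ ≤ ∑ i ∈ Finset.range (n + 1), (1 / 2) ^ max (i + 1) 2 * (Nat.card G : ℚ) :=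
          Finset.sum_le_sum fun i _ ↦ h_class i
      _ = (3 / 4 - (1 / 2) ^ (n + 1)) * Nat.card G := by
          rw [← Finset.sum_mul, sum_half_pow_max_two]
      _ < 3 / 4 * Nat.card G :=
          mul_lt_mul_of_pos_right (sub_lt_self _ (by positivity)) h_pos
  have h_lt' : (4 : ℚ) * (center G : Set G)ᶜ.ncard < 3 * Nat.card G := by linarith
  exact_mod_cast h_lt'

theorem center_eq_top_of_isPGroup [Finite G] {p : ℕ} [Fact p.Prime] (hG : IsOCGroup G)
    (hp : IsPGroup p G) : center G = ⊤ := by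
  by_contra h
  have h_center : 4 * (center G : Set G).ncard ≤ Nat.card G := four_mul_card_center_le_card h
  have h_compl := hG.four_mul_ncard_compl_center_lt hp
  have h_total := Set.ncard_add_ncard_compl (center G : Set G)
  omega

theorem center_eq_top_of_isNilpotent [Finite G] [Group.IsNilpotent G] (hG : IsOCGroup G) :
    center G = ⊤ := by
  obtain ⟨e⟩ := ((Group.isNilpotent_of_finite_tfae (G := G)).out 0 4).1 ‹_›
  have sylow_center (p : (Nat.card G).primeFactors) (P : Sylow p G) : center P = ⊤ := by
    have : Fact (p : ℕ).Prime := ⟨Nat.prime_of_mem_primeFactors p.2⟩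
    exact (((hG.of_mulEquiv e).of_pi p).of_pi P).center_eq_top_of_isPGroup P.isPGroup'
  refine (eq_top_iff' _).2 fun x ↦ mem_center_iff.2 fun y ↦ e.symm.injective ?_
  rw [map_mul, map_mul]
  funext p P
  exact mem_center_iff.1 (sylow_center p P ▸ mem_top (e.symm x p P)) (e.symm y p P)

end IsOCGroup

/-- **Lemma 2.6.** A non-trivial OC-group is not nilpotent. -/
theorem nontrivial_oc_group_not_nilpotent (G : Type) [Group G] [Finite G]
    (hOC : ∀ x y : G, x ∉ Subgroup.center G → y ∉ Subgroup.center G →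
      orderOf x = orderOf y → IsConj x y)
    (h1 : ⊥ < Subgroup.center G) (h2 : Subgroup.center G < ⊤) :
    ¬ Group.IsNilpotent G := by
  intro _
  exact h2.ne (IsOCGroup.center_eq_top_of_isNilpotent hOC)
end
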